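/- If G is a bipartite graph such that R/I(G) is sequentially Cohen-Macaulay, then reg(R/I(G)) = im(G), the induced matching number of G. -/

import Mathlib

open MvPolynomial

/-- A finite graded free resolution of `R/I`, where `R = K[x₁,…,xₙ]`.
`F_i = ⊕_j R(-tw i j)` with `rk i` summands, differentials `δ i : F_{i+1} → F_i`
given by matrices with homogeneous entries of the correct degrees, exact, and
augmented by a degree-preserving surjection `F₀ → R/I`. -/
structure GFR (n : ℕ) (K : Type) [Field K] (I : Ideal (MvPolynomial (Fin n) K)) : Type where
  len : ℕ
  rk : ℕ → ℕ
  rk_zero : ∀ i, len < i → rk i = 0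
  tw : (i : ℕ) → Fin (rk i) → ℕ
  δ : (i : ℕ) → ((Fin (rk (i + 1)) → MvPolynomial (Fin n) K) →ₗ[MvPolynomial (Fin n) K]
        (Fin (rk i) → MvPolynomial (Fin n) K))
  δ_homog : ∀ (i : ℕ) (k : Fin (rk (i + 1))) (j : Fin (rk i)),
      δ i (Pi.single k 1) j = 0 ∨
        (tw i j ≤ tw (i + 1) k ∧ (δ i (Pi.single k 1) j).IsHomogeneous (tw (i + 1) k - tw i j))
  aug : (Fin (rk 0) → MvPolynomial (Fin n) K) →ₗ[MvPolynomial (Fin n) K] MvPolynomial (Fin n) K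
  aug_homog : ∀ j : Fin (rk 0), (aug (Pi.single j 1)).IsHomogeneous (tw 0 j)
  aug_surj : ∀ r : MvPolynomial (Fin n) K, ∃ x, r - aug x ∈ I
  exact_zero : LinearMap.range (δ 0) = Submodule.comap aug I
  exact_succ : ∀ i : ℕ, LinearMap.range (δ (i + 1)) = LinearMap.ker (δ i)

/-- The Castelnuovo–Mumford regularity of `R/I`:
the least `r` such that `R/I` admits a (finite) graded free resolution all of whose
`i`-th twists are at most `r + i`.  (This value is attained by the minimal graded free
resolution, so it equals `max { j - i : b_{ij}(R/I) ≠ 0 }`.) -/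
noncomputable def regR {n : ℕ} {K : Type} [Field K] (I : Ideal (MvPolynomial (Fin n) K)) : ℕ :=
  sInf { r : ℕ | ∃ F : GFR n K I, ∀ (i : ℕ) (j : Fin (F.rk i)), F.tw i j ≤ r + i }

/-- The maximal graded ideal `m = (x₁,…,xₙ)` of `K[x₁,…,xₙ]`. -/
noncomputable def maxIdeal (n : ℕ) (K : Type) [Field K] : Ideal (MvPolynomial (Fin n) K) :=
  Ideal.span (Set.range (X : Fin n → MvPolynomial (Fin n) K))

/-- The depth of a module `M` over `R = K[x₁,…,xₙ]` with respect to the maximal graded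
ideal `m`: the largest length of an `M`-regular sequence contained in `m`. -/
noncomputable def depthR (n : ℕ) (K : Type) [Field K] (M : Type)
    [AddCommGroup M] [Module (MvPolynomial (Fin n) K) M] : ℕ :=
  sSup { k : ℕ | ∃ rs : List (MvPolynomial (Fin n) K), rs.length = k ∧
    (∀ r ∈ rs, r ∈ maxIdeal n K) ∧ RingTheory.Sequence.IsRegular M rs }

/-- The (Krull) dimension of a module `M` over `R = K[x₁,…,xₙ]`:
the Krull dimension of `R/ann(M)`. -/
noncomputable def dimR (n : ℕ) (K : Type) [Field K] (M : Type)
    [AddCommGroup M] [Module (MvPolynomial (Fin n) K) M] : WithBot (WithTop ℕ) :=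
  ringKrullDim (MvPolynomial (Fin n) K ⧸ Module.annihilator (MvPolynomial (Fin n) K) M)

/-- A module over `R = K[x₁,…,xₙ]` is Cohen–Macaulay if it is zero or
its depth equals its Krull dimension. -/
def IsCMmod (n : ℕ) (K : Type) [Field K] (M : Type)
    [AddCommGroup M] [Module (MvPolynomial (Fin n) K) M] : Prop :=
  Subsingleton M ∨ (((depthR n K M : ℕ) : WithTop ℕ) : WithBot (WithTop ℕ)) = dimR n K M

/-- The subquotient `B/A` of a module, for submodules `A ≤ B`. -/
abbrev subQuot {R M : Type} [CommRing R] [AddCommGroup M] [Module R M]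
    (A B : Submodule R M) : Type :=
  ↥B ⧸ Submodule.comap B.subtype A

/-- A submodule `W` of `R/I` is graded (homogeneous) if it is stable under taking
homogeneous components of representatives. -/
def IsGradedSub {n : ℕ} {K : Type} [Field K] (I : Ideal (MvPolynomial (Fin n) K))
    (W : Submodule (MvPolynomial (Fin n) K) (MvPolynomial (Fin n) K ⧸ I)) : Prop :=
  ∀ p : MvPolynomial (Fin n) K, Ideal.Quotient.mk I p ∈ W →
    ∀ d : ℕ, Ideal.Quotient.mk I (homogeneousComponent d p) ∈ W

/-- `R/I` is sequentially Cohen–Macaulay: there is a finite filtration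
`0 = M₀ ⊆ M₁ ⊆ ⋯ ⊆ M_r = R/I` by graded submodules whose successive quotients are
Cohen–Macaulay with strictly increasing Krull dimensions. -/
def IsSeqCM {n : ℕ} (K : Type) [Field K] (I : Ideal (MvPolynomial (Fin n) K)) : Prop :=
  ∃ (r : ℕ) (Mf : Fin (r + 1) → Submodule (MvPolynomial (Fin n) K)
      (MvPolynomial (Fin n) K ⧸ I)),
    Mf 0 = ⊥ ∧ Mf (Fin.last r) = ⊤ ∧
    (∀ i : Fin r, Mf i.castSucc ≤ Mf i.succ) ∧
    (∀ i : Fin (r + 1), IsGradedSub I (Mf i)) ∧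
    (∀ i : Fin r, IsCMmod n K (subQuot (Mf i.castSucc) (Mf i.succ))) ∧
    (∀ i j : Fin r, i < j →
      dimR n K (subQuot (Mf i.castSucc) (Mf i.succ)) <
        dimR n K (subQuot (Mf j.castSucc) (Mf j.succ)))

/-- The edge ideal of a (simple) graph, in `K[x_v : v ∈ V]`. -/
noncomputable def graphIdeal (K : Type) [Field K] {V : Type} (G : SimpleGraph V) :
    Ideal (MvPolynomial V K) :=
  Ideal.span { m : MvPolynomial V K | ∃ u v : V, G.Adj u v ∧ m = X u * X v }

/-- An induced matching of a graph: pairwise disjoint edges `f 0, …, f (r-1)` such that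
the only edges of `G` joining two vertices of their union are the `f i` themselves. -/
def SimpleGraph.IsInducedMatching {V : Type} [DecidableEq V] (G : SimpleGraph V)
    {r : ℕ} (f : Fin r → V × V) : Prop :=
  (∀ i, G.Adj (f i).1 (f i).2) ∧
  (∀ i j, i ≠ j → Disjoint ({(f i).1, (f i).2} : Finset V) {(f j).1, (f j).2}) ∧
  (∀ u v : V, G.Adj u v →
    u ∈ Finset.univ.biUnion (fun i => ({(f i).1, (f i).2} : Finset V)) →
    v ∈ Finset.univ.biUnion (fun i => ({(f i).1, (f i).2} : Finset V)) →
    ∃ i, ({u, v} : Finset V) = {(f i).1, (f i).2})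

/-- The induced matching number of a graph. -/
noncomputable def imG {V : Type} [DecidableEq V] (G : SimpleGraph V) : ℕ :=
  sSup { r : ℕ | ∃ f : Fin r → V × V, G.IsInducedMatching f }

/-- A graph is bipartite if its vertex set splits into two parts such that every edge
joins the two parts. -/
def SimpleGraph.IsBipartiteGraph {V : Type} (G : SimpleGraph V) : Prop :=
  ∃ A : Set V, ∀ u v : V, G.Adj u v → (u ∈ A ↔ v ∉ A)

namespace SCMB

section Basic

variable {n : ℕ} {K : Type} [Field K]

/-- Homogeneous elements of degree `d` in the twisted ring `R(-s)`. -/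
noncomputable def hp (n : ℕ) (K : Type) [Field K] (s d : ℕ) :
    AddSubgroup (MvPolynomial (Fin n) K) where
  carrier := {p | p = 0 ∨ (s ≤ d ∧ p.IsHomogeneous (d - s))}
  zero_mem' := Or.inl rfl
  add_mem' := by
    rintro a b (rfl | ha) (rfl | hb)
    · left; simp
    · right; simpa using hb
    · right; simpa using ha
    · right; exact ⟨ha.1, ha.2.add hb.2⟩
  neg_mem' := by
    rintro a (rfl | ha)
    · left; simp
    · right; exact ⟨ha.1, ha.2.neg⟩

theorem mem_hp {s d : ℕ} {p : MvPolynomial (Fin n) K} :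
    p ∈ hp n K s d ↔ p = 0 ∨ (s ≤ d ∧ p.IsHomogeneous (d - s)) := Iff.rfl

/-- Projection to the degree `d` part of `R(-s)`. -/
noncomputable def hc (s d : ℕ) (p : MvPolynomial (Fin n) K) : MvPolynomial (Fin n) K :=
  if s ≤ d then homogeneousComponent (d - s) p else 0

theorem hc_mem (s d : ℕ) (p : MvPolynomial (Fin n) K) : hc s d p ∈ hp n K s d := by
  unfold hc
  split_ifs with h
  · exact Or.inr ⟨h, homogeneousComponent_isHomogeneous _ _⟩
  · exact Or.inl rfl

theorem hc_of_mem {s d : ℕ} {p : MvPolynomial (Fin n) K} (h : p ∈ hp n K s d) : hc s d p = p := by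
  unfold hc
  rcases h with rfl | ⟨h1, h2⟩
  · simp
  · rw [if_pos h1, homogeneousComponent_eq_self h2]

theorem hc_sum {ι : Type} (t : Finset ι) (s d : ℕ) (p : ι → MvPolynomial (Fin n) K) :
    hc s d (∑ i ∈ t, p i) = ∑ i ∈ t, hc s d (p i) := by
  unfold hc
  split_ifs <;> simp

theorem hc_sub (s d : ℕ) (p q : MvPolynomial (Fin n) K) :
    hc s d (p - q) = hc s d p - hc s d q := by
  unfold hc
  split_ifs <;> simp

theorem homogComp_mul (e b : ℕ) (p q : MvPolynomial (Fin n) K) (hq : q.IsHomogeneous b) :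
    homogeneousComponent e (p * q) =
      if b ≤ e then homogeneousComponent (e - b) p * q else 0 := by
  conv_lhs => rw [← sum_homogeneousComponent p, Finset.sum_mul, map_sum]
  have h1 : ∀ i, homogeneousComponent e (homogeneousComponent i p * q) =
      if i + b = e then homogeneousComponent i p * q else 0 := by
    intro i
    rw [homogeneousComponent_of_mem
      ((mem_homogeneousSubmodule _ _).2 ((homogeneousComponent_isHomogeneous i p).mul hq))]
    simp [eq_comm]
  simp_rw [h1]
  split_ifs with hb
  · have : ∀ i, (i + b = e) ↔ (e - b = i) := by intro i; omega
    simp_rw [this]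
    rw [Finset.sum_ite_eq]
    split_ifs with hm
    · rfl
    · rw [homogeneousComponent_eq_zero]
      · simp
      · simp at hm; omega
  · apply Finset.sum_eq_zero
    intro i _
    rw [if_neg (by omega)]

theorem hc_mul {s t d : ℕ} (p q : MvPolynomial (Fin n) K) (hq : q ∈ hp n K s t) :
    hc s d (p * q) = hc t d p * q := by
  rcases hq with rfl | ⟨h1, h2⟩
  · simp [hc]
  · unfold hc
    by_cases htd : t ≤ d
    · rw [if_pos (h1.trans htd), if_pos htd, homogComp_mul _ _ _ _ h2, if_pos (by omega)]
      congr 3; omega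
    · rw [if_neg htd]
      split_ifs with h
      · rw [homogComp_mul _ _ _ _ h2, if_neg (by omega)]; simp
      · simp

theorem mul_mem_hp {s t d : ℕ} {p q : MvPolynomial (Fin n) K} (hp' : p ∈ hp n K t d)
    (hq : q ∈ hp n K s t) : p * q ∈ hp n K s d := by
  have := hc_mul (d := d) p q hq
  rw [hc_of_mem hp'] at this
  rw [← this]; exact hc_mem _ _ _

/-- Graded pieces of a twisted free module. -/
noncomputable def frGr {ι : Type} (s : ι → ℕ) (d : ℕ) :
    AddSubgroup (ι → MvPolynomial (Fin n) K) :=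
  AddSubgroup.pi Set.univ (fun j => hp n K (s j) d)

theorem mem_frGr {ι : Type} {s : ι → ℕ} {d : ℕ} {x : ι → MvPolynomial (Fin n) K} :
    x ∈ frGr s d ↔ ∀ j, x j ∈ hp n K (s j) d := by
  simp [frGr, AddSubgroup.mem_pi]

/-- The induced grading on a submodule of a twisted free module. -/
noncomputable def kerGr {ι : Type} (s : ι → ℕ)
    (Z : Submodule (MvPolynomial (Fin n) K) (ι → MvPolynomial (Fin n) K)) (d : ℕ) :
    AddSubgroup Z :=
  (frGr s d).comap Z.subtype.toAddMonoidHom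

theorem mem_kerGr {ι : Type} {s : ι → ℕ}
    {Z : Submodule (MvPolynomial (Fin n) K) (ι → MvPolynomial (Fin n) K)} {d : ℕ} {x : Z} :
    x ∈ kerGr s Z d ↔ ∀ j, x.1 j ∈ hp n K (s j) d := by
  simp [kerGr, mem_frGr]

/-- `HasRes ℓ c M gr`: the graded module `M` has a graded free resolution of length `< ℓ` whose
`i`-th twists are at most `c + i`. -/
def HasRes (n : ℕ) (K : Type) [Field K] : ℕ → ℕ → (M : Type) → [AddCommGroup M] →
    [Module (MvPolynomial (Fin n) K) M] → (ℕ → AddSubgroup M) → Prop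
  | 0, _, M, _, _, _ => Subsingleton M
  | ℓ + 1, c, M, _, _, gr => ∃ (m : ℕ) (s : Fin m → ℕ)
      (ε : (Fin m → MvPolynomial (Fin n) K) →ₗ[MvPolynomial (Fin n) K] M),
      (∀ j, s j ≤ c) ∧ (∀ j, ε (Pi.single j 1) ∈ gr (s j)) ∧ Function.Surjective ε ∧
      (∀ d, ∀ a ∈ gr d, ∃ w ∈ frGr s d, ε w = a) ∧
      HasRes n K ℓ (c + 1) (LinearMap.ker ε) (kerGr s (LinearMap.ker ε))

theorem HasRes.iso {ℓ c : ℕ} {M N : Type} [AddCommGroup M] [Module (MvPolynomial (Fin n) K) M]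
    [AddCommGroup N] [Module (MvPolynomial (Fin n) K) N] {gM : ℕ → AddSubgroup M}
    {gN : ℕ → AddSubgroup N} (e : M ≃ₗ[MvPolynomial (Fin n) K] N)
    (he : ∀ d x, e x ∈ gN d ↔ x ∈ gM d) (h : HasRes n K ℓ c M gM) : HasRes n K ℓ c N gN := by
  cases ℓ with
  | zero =>
    have : Subsingleton M := h
    exact e.symm.injective.subsingleton
  | succ ℓ =>
    obtain ⟨m, s, ε, h1, h2, h3, h4, h5⟩ := h
    refine ⟨m, s, e.toLinearMap ∘ₗ ε, h1, fun j => (he _ _).2 (h2 j),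
      e.surjective.comp h3, ?_, ?_⟩
    · intro d a ha
      obtain ⟨w, hw, hwa⟩ := h4 d (e.symm a) ((he _ _).1 (by simpa using ha))
      exact ⟨w, hw, by simp [hwa]⟩
    · have : LinearMap.ker (e.toLinearMap ∘ₗ ε) = LinearMap.ker ε := by
        ext; simp
      rw [this]; exact h5

theorem HasRes.mono {ℓ c c' : ℕ} (hc' : c ≤ c') {M : Type} [AddCommGroup M]
    [Module (MvPolynomial (Fin n) K) M] {gM : ℕ → AddSubgroup M}
    (h : HasRes n K ℓ c M gM) : HasRes n K ℓ c' M gM := by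
  induction ℓ generalizing c c' M with
  | zero => exact h
  | succ ℓ ih =>
    obtain ⟨m, s, ε, h1, h2, h3, h4, h5⟩ := h
    exact ⟨m, s, ε, fun j => (h1 j).trans hc', h2, h3, h4, ih (by omega) h5⟩

theorem HasRes.succ {ℓ c : ℕ} {M : Type} [AddCommGroup M]
    [Module (MvPolynomial (Fin n) K) M] {gM : ℕ → AddSubgroup M}
    (h : HasRes n K ℓ c M gM) : HasRes n K (ℓ + 1) c M gM := by
  induction ℓ generalizing c M with
  | zero =>
    have : Subsingleton M := h
    refine ⟨0, fun _ => 0, 0, fun j => j.elim0, fun j => j.elim0,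
      fun x => ⟨0, Subsingleton.elim _ _⟩, fun d a _ => ⟨0, zero_mem _, Subsingleton.elim _ _⟩, ?_⟩
    change Subsingleton _
    infer_instance
  | succ ℓ ih =>
    obtain ⟨m, s, ε, h1, h2, h3, h4, h5⟩ := h
    exact ⟨m, s, ε, h1, h2, h3, h4, ih h5⟩

theorem HasRes.mono_len {ℓ ℓ' c : ℕ} (hl : ℓ ≤ ℓ') {M : Type} [AddCommGroup M]
    [Module (MvPolynomial (Fin n) K) M] {gM : ℕ → AddSubgroup M}
    (h : HasRes n K ℓ c M gM) : HasRes n K ℓ' c M gM := by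
  induction hl with
  | refl => exact h
  | step _ ih => exact ih.succ

/-- Constructor with arbitrary finite index type. -/
theorem HasRes.mk' {ℓ c : ℕ} {M : Type} [AddCommGroup M]
    [Module (MvPolynomial (Fin n) K) M] {gr : ℕ → AddSubgroup M}
    {ι : Type} [Fintype ι] [DecidableEq ι] (s : ι → ℕ)
    (ε : (ι → MvPolynomial (Fin n) K) →ₗ[MvPolynomial (Fin n) K] M)
    (h1 : ∀ j, s j ≤ c) (h2 : ∀ j, ε (Pi.single j 1) ∈ gr (s j)) (h3 : Function.Surjective ε)
    (h4 : ∀ d, ∀ a ∈ gr d, ∃ w ∈ frGr s d, ε w = a)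
    (h5 : HasRes n K ℓ (c + 1) (LinearMap.ker ε) (kerGr s (LinearMap.ker ε))) :
    HasRes n K (ℓ + 1) c M gr := by
  let e := Fintype.equivFin ι
  let E := LinearEquiv.funCongrLeft (MvPolynomial (Fin n) K) (MvPolynomial (Fin n) K) e
  have hE : ∀ x i, E x i = x (e i) := fun x i => rfl
  have hEs : ∀ x i, E.symm x (e i) = x i := by
    intro x i
    rw [← hE (E.symm x) i, LinearEquiv.apply_symm_apply]
  refine ⟨Fintype.card ι, s ∘ e.symm, ε ∘ₗ E.toLinearMap, fun j => h1 _, ?_,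
    h3.comp E.surjective, ?_, ?_⟩
  · intro j
    have : E (Pi.single j 1) = Pi.single (e.symm j) 1 := by
      ext1 i
      rw [hE, Pi.single_apply, Pi.single_apply]
      congr 1
      rw [eq_iff_iff]
      exact (Equiv.eq_symm_apply e).symm
    simp only [LinearMap.comp_apply, LinearEquiv.coe_coe, this]
    exact h2 _
  · intro d a ha
    obtain ⟨w, hw, rfl⟩ := h4 d a ha
    refine ⟨E.symm w, ?_, by simp⟩
    rw [mem_frGr] at hw ⊢
    intro j
    obtain ⟨i, rfl⟩ := e.surjective j
    rw [hEs]
    simpa using hw i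
  · have hk : ∀ x : Fin (Fintype.card ι) → MvPolynomial (Fin n) K,
        x ∈ LinearMap.ker (ε ∘ₗ E.toLinearMap) ↔ E x ∈ LinearMap.ker ε := by
      intro x; simp
    have hm : (LinearMap.ker ε).map (E.symm : _ →ₗ[MvPolynomial (Fin n) K] _) =
        LinearMap.ker (ε ∘ₗ E.toLinearMap) := by
      ext x
      rw [hk]
      constructor
      · rintro ⟨y, hy, rfl⟩
        simpa using hy
      · intro h
        exact ⟨E x, h, by simp⟩
    refine HasRes.iso (E.symm.ofSubmodules _ _ hm) ?_ h5
    intro d x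
    rw [mem_kerGr, mem_kerGr]
    have : ∀ j, (E.symm.ofSubmodules _ _ hm x).1 (e j) = x.1 j := fun j => hEs x.1 j
    constructor
    · intro h j
      have h' := h (e j)
      rw [this] at h'
      simpa using h'
    · intro h j
      obtain ⟨i, rfl⟩ := e.surjective j
      rw [this]
      simpa using h i

end Basic
end SCMB

namespace SCMB

section GFRconv

variable {n : ℕ} {K : Type} [Field K]

theorem lin_apply {ι : Type} [Fintype ι] [DecidableEq ι] {M : Type} [AddCommGroup M]
    [Module (MvPolynomial (Fin n) K) M]
    (f : (ι → MvPolynomial (Fin n) K) →ₗ[MvPolynomial (Fin n) K] M)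
    (x : ι → MvPolynomial (Fin n) K) : f x = ∑ k, x k • f (Pi.single k 1) := by
  conv_lhs => rw [pi_eq_sum_univ' x]
  simp [map_sum]

theorem comp_comm {ι κ : Type} [Fintype ι] [DecidableEq ι] (s : ι → ℕ) (t : κ → ℕ)
    (f : (ι → MvPolynomial (Fin n) K) →ₗ[MvPolynomial (Fin n) K] (κ → MvPolynomial (Fin n) K))
    (hf : ∀ k j, f (Pi.single k 1) j ∈ hp n K (t j) (s k)) (d : ℕ)
    (x : ι → MvPolynomial (Fin n) K) (j : κ) :
    hc (t j) d (f x j) = f (fun k => hc (s k) d (x k)) j := by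
  rw [lin_apply f x, lin_apply f (fun k => hc (s k) d (x k))]
  simp only [Finset.sum_apply, Pi.smul_apply, smul_eq_mul, hc_sum]
  exact Finset.sum_congr rfl fun k _ => hc_mul _ _ (hf k j)

/-- The standard grading on `R/I`. -/
noncomputable def grQ (I : Ideal (MvPolynomial (Fin n) K)) (d : ℕ) :
    AddSubgroup (MvPolynomial (Fin n) K ⧸ I) :=
  (hp n K 0 d).map (Ideal.Quotient.mk I).toAddMonoidHom

theorem mem_grQ {I : Ideal (MvPolynomial (Fin n) K)} {d : ℕ} {a : MvPolynomial (Fin n) K ⧸ I} :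
    a ∈ grQ I d ↔ ∃ p ∈ hp n K 0 d, Ideal.Quotient.mk I p = a := Iff.rfl

def IsHomI (I : Ideal (MvPolynomial (Fin n) K)) : Prop :=
  ∀ p ∈ I, ∀ d, homogeneousComponent d p ∈ I

theorem IsHomI.hc_mem {I : Ideal (MvPolynomial (Fin n) K)} (hI : IsHomI I)
    {p : MvPolynomial (Fin n) K} (hp' : p ∈ I) (s d : ℕ) : hc s d p ∈ I := by
  unfold hc
  split_ifs
  · exact hI _ hp' _
  · exact zero_mem _

theorem hasRes_of_ker {ℓ c m : ℕ} (s : Fin m → ℕ)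
    {Z Z' : Submodule (MvPolynomial (Fin n) K) (Fin m → MvPolynomial (Fin n) K)} (h : Z = Z')
    (hr : HasRes n K ℓ c Z (kerGr s Z)) : HasRes n K ℓ c Z' (kerGr s Z') := by
  subst h; exact hr

theorem GFR.δmem {I : Ideal (MvPolynomial (Fin n) K)} (F : GFR n K I) (i : ℕ)
    (k : Fin (F.rk (i + 1))) (j : Fin (F.rk i)) :
    F.δ i (Pi.single k 1) j ∈ hp n K (F.tw i j) (F.tw (i + 1) k) := F.δ_homog i k j

theorem GFR.hasRes_range {I : Ideal (MvPolynomial (Fin n) K)} (F : GFR n K I) {r : ℕ}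
    (hr : ∀ (i : ℕ) (j : Fin (F.rk i)), F.tw i j ≤ r + i) (k : ℕ) : ∀ j : ℕ, F.len < j + k →
    HasRes n K k (r + j + 1) (LinearMap.range (F.δ j)) (kerGr (F.tw j) (LinearMap.range (F.δ j))) := by
  induction k with
  | zero =>
    intro j hj
    have h0 : F.rk j = 0 := F.rk_zero j (by omega)
    have : IsEmpty (Fin (F.rk j)) := by rw [h0]; infer_instance
    change Subsingleton _
    constructor
    intro a b
    apply Subtype.ext
    exact Subsingleton.elim _ _
  | succ k ih =>
    intro j hj
    refine ⟨F.rk (j + 1), F.tw (j + 1), (F.δ j).rangeRestrict, ?_, ?_, ?_, ?_, ?_⟩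
    · intro i; have := hr (j + 1) i; omega
    · intro i
      rw [mem_kerGr]
      intro l
      exact GFR.δmem F j i l
    · exact LinearMap.surjective_rangeRestrict _
    · rintro d ⟨a, x, rfl⟩ ha
      refine ⟨fun l => hc (F.tw (j + 1) l) d (x l), ?_, ?_⟩
      · rw [mem_frGr]; intro l; exact hc_mem _ _ _
      · apply Subtype.ext
        ext1 l
        rw [mem_kerGr] at ha
        have h1 := comp_comm (F.tw (j + 1)) (F.tw j) (F.δ j) (GFR.δmem F j) d x l
        exact h1.symm.trans (hc_of_mem (ha l))
    · rw [show r + j + 1 + 1 = r + (j + 1) + 1 by ring]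
      refine hasRes_of_ker _ ?_ (ih (j + 1) (by omega))
      rw [F.exact_succ, LinearMap.ker_rangeRestrict]

theorem GFR.hasRes {I : Ideal (MvPolynomial (Fin n) K)} (hI : IsHomI I) (F : GFR n K I) {r : ℕ}
    (hr : ∀ (i : ℕ) (j : Fin (F.rk i)), F.tw i j ≤ r + i) :
    ∃ ℓ, HasRes n K ℓ r (MvPolynomial (Fin n) K ⧸ I) (grQ I) := by
  refine ⟨F.len + 1 + 1, F.rk 0, F.tw 0, (Submodule.mkQ I) ∘ₗ F.aug, ?_, ?_, ?_, ?_, ?_⟩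
  · intro j; simpa using hr 0 j
  · intro j
    exact ⟨_, Or.inr ⟨Nat.zero_le _, by simpa using F.aug_homog j⟩, rfl⟩
  · intro a
    obtain ⟨a, rfl⟩ := Ideal.Quotient.mk_surjective a
    obtain ⟨x, hx⟩ := F.aug_surj a
    exact ⟨x, ((Ideal.Quotient.eq).2 hx).symm⟩
  · rintro d a ⟨p, hp', rfl⟩
    obtain ⟨x, hx⟩ := F.aug_surj p
    refine ⟨fun l => hc (F.tw 0 l) d (x l), ?_, ?_⟩
    · rw [mem_frGr]; intro l; exact hc_mem _ _ _
    · symm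
      refine (Ideal.Quotient.eq).2 ?_
      have h1 := hI.hc_mem hx 0 d
      rw [hc_sub, hc_of_mem hp'] at h1
      have h2 := comp_comm (κ := Unit) (F.tw 0) (fun _ => 0) (LinearMap.pi fun _ => F.aug)
        (fun k j => Or.inr ⟨Nat.zero_le _, by simpa using F.aug_homog k⟩) d x ()
      have h3 : hc 0 d (F.aug x) = F.aug (fun l => hc (F.tw 0 l) d (x l)) := h2
      rw [← h3]; exact h1
  · refine hasRes_of_ker _ ?_ (GFR.hasRes_range F hr (F.len + 1) 0 (by omega))
    rw [F.exact_zero]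
    ext x
    simp [LinearMap.mem_ker, Ideal.Quotient.eq_zero_iff_mem]

theorem HasRes.data {ℓ : ℕ} : ∀ {c : ℕ} {M : Type} [AddCommGroup M]
    [Module (MvPolynomial (Fin n) K) M] {gr : ℕ → AddSubgroup M}, HasRes n K ℓ c M gr →
    ∃ (rk : ℕ → ℕ) (tw : (i : ℕ) → Fin (rk i) → ℕ)
      (δ : (i : ℕ) → ((Fin (rk (i + 1)) → MvPolynomial (Fin n) K) →ₗ[MvPolynomial (Fin n) K]
        (Fin (rk i) → MvPolynomial (Fin n) K)))
      (ε : (Fin (rk 0) → MvPolynomial (Fin n) K) →ₗ[MvPolynomial (Fin n) K] M),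
      (∀ i, ℓ ≤ i → rk i = 0) ∧ (∀ i j, tw i j ≤ c + i) ∧
      (∀ i k j, δ i (Pi.single k 1) j ∈ hp n K (tw i j) (tw (i + 1) k)) ∧
      (∀ j, ε (Pi.single j 1) ∈ gr (tw 0 j)) ∧ Function.Surjective ε ∧
      LinearMap.range (δ 0) = LinearMap.ker ε ∧
      ∀ i, LinearMap.range (δ (i + 1)) = LinearMap.ker (δ i) := by
  induction ℓ with
  | zero =>
    intro c M _ _ gr h
    have : Subsingleton M := h
    refine ⟨fun _ => 0, fun _ j => j.elim0, fun _ => 0, 0, fun _ _ => rfl, fun _ j => j.elim0,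
      fun _ j => j.elim0, fun j => j.elim0, fun x => ⟨0, Subsingleton.elim _ _⟩, ?_, ?_⟩
    · exact Subsingleton.elim _ _
    · intro i; exact Subsingleton.elim _ _
  | succ ℓ ih =>
    intro c M _ _ gr h
    obtain ⟨m, s, ε, h1, h2, h3, h4, h5⟩ := h
    obtain ⟨rk, tw, δ, ε', g1, g2, g3, g4, g5, g6, g7⟩ := ih h5
    refine ⟨fun i => match i with | 0 => m | i + 1 => rk i,
      fun i => match i with | 0 => s | i + 1 => tw i,
      fun i => match i with | 0 => (LinearMap.ker ε).subtype ∘ₗ ε' | i + 1 => δ i,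
      ε, ?_, ?_, ?_, h2, h3, ?_, ?_⟩
    · intro i hi
      match i with
      | 0 => omega
      | i + 1 => exact g1 i (by omega)
    · intro i j
      match i with
      | 0 => exact h1 j
      | i + 1 => have := g2 i j; show tw i j ≤ _; omega
    · intro i k j
      match i with
      | 0 => exact mem_kerGr.1 (g4 k) j
      | i + 1 => exact g3 i k j
    · show LinearMap.range ((LinearMap.ker ε).subtype ∘ₗ ε') = _
      rw [LinearMap.range_comp, LinearMap.range_eq_top.2 g5, Submodule.map_top,
        Submodule.range_subtype]
    · intro i
      match i with
      | 0 =>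
        show LinearMap.range (δ 0) = LinearMap.ker ((LinearMap.ker ε).subtype ∘ₗ ε')
        rw [g6, LinearMap.ker_comp, Submodule.ker_subtype]; rfl
      | i + 1 => exact g7 i

theorem HasRes.toGFR {ℓ c : ℕ} {I : Ideal (MvPolynomial (Fin n) K)}
    (h : HasRes n K ℓ c (MvPolynomial (Fin n) K ⧸ I) (grQ I)) :
    ∃ F : GFR n K I, ∀ (i : ℕ) (j : Fin (F.rk i)), F.tw i j ≤ c + i := by
  obtain ⟨rk, tw, δ, ε, g1, g2, g3, g4, g5, g6, g7⟩ := h.data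
  choose q hq1 hq2 using g4
  let aug : (Fin (rk 0) → MvPolynomial (Fin n) K) →ₗ[MvPolynomial (Fin n) K]
      MvPolynomial (Fin n) K := Fintype.linearCombination (MvPolynomial (Fin n) K) q
  have haug : ∀ j, aug (Pi.single j 1) = q j := by
    intro j; simp [aug, Fintype.linearCombination_apply_single]
  have hε : ∀ x, Ideal.Quotient.mk I (aug x) = ε x := by
    intro x
    have : (Submodule.mkQ I) ∘ₗ aug = ε := by
      apply LinearMap.pi_ext'
      intro j
      ext1
      simp only [LinearMap.comp_apply, LinearMap.single_apply, haug]
      exact hq2 j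
    rw [← this]; rfl
  refine ⟨⟨ℓ, rk, fun i hi => g1 i hi.le, tw, δ, g3, aug, ?_, ?_, ?_, g7⟩, g2⟩
  · intro j
    rw [haug]
    rcases hq1 j with h | ⟨_, h⟩
    · rw [h]; exact isHomogeneous_zero _ _ _
    · simpa using h
  · intro r
    obtain ⟨x, hx⟩ := g5 (Ideal.Quotient.mk I r)
    exact ⟨x, (Ideal.Quotient.eq).1 (by rw [hε, hx])⟩
  · rw [g6]
    ext x
    rw [LinearMap.mem_ker, ← hε, Ideal.Quotient.eq_zero_iff_mem]; rfl

end GFRconv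
end SCMB

namespace SCMB

section Horseshoe

variable {n : ℕ} {K : Type} [Field K]

structure SES {A B C : Type} [AddCommGroup A] [Module (MvPolynomial (Fin n) K) A]
    [AddCommGroup B] [Module (MvPolynomial (Fin n) K) B]
    [AddCommGroup C] [Module (MvPolynomial (Fin n) K) C]
    (f : A →ₗ[MvPolynomial (Fin n) K] B) (g : B →ₗ[MvPolynomial (Fin n) K] C)
    (gA : ℕ → AddSubgroup A) (gB : ℕ → AddSubgroup B) (gC : ℕ → AddSubgroup C) : Prop where
  inj : Function.Injective f
  exact : ∀ b, g b = 0 → ∃ a, f a = b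
  comp : ∀ a, g (f a) = 0
  surj : Function.Surjective g
  gf : ∀ d a, f a ∈ gB d ↔ a ∈ gA d
  gg : ∀ d b, b ∈ gB d → g b ∈ gC d
  lift : ∀ d c, c ∈ gC d → ∃ b ∈ gB d, g b = c
  smul : ∀ t d (p : MvPolynomial (Fin n) K) b, p ∈ hp n K t d → b ∈ gB t → p • b ∈ gB d

theorem kerGr_smul {ι : Type} (s : ι → ℕ)
    (Z : Submodule (MvPolynomial (Fin n) K) (ι → MvPolynomial (Fin n) K)) (t d : ℕ)
    (p : MvPolynomial (Fin n) K) (b : Z) (hp' : p ∈ hp n K t d) (hb : b ∈ kerGr s Z t) :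
    p • b ∈ kerGr s Z d := by
  rw [mem_kerGr] at hb ⊢
  intro j
  exact mul_mem_hp hp' (hb j)

theorem eps_mem {M : Type} [AddCommGroup M] [Module (MvPolynomial (Fin n) K) M]
    {gr : ℕ → AddSubgroup M}
    (hs : ∀ t d (p : MvPolynomial (Fin n) K) b, p ∈ hp n K t d → b ∈ gr t → p • b ∈ gr d)
    {ι : Type} [Fintype ι] [DecidableEq ι] (s : ι → ℕ)
    (ε : (ι → MvPolynomial (Fin n) K) →ₗ[MvPolynomial (Fin n) K] M)
    (h2 : ∀ j, ε (Pi.single j 1) ∈ gr (s j)) {d : ℕ} {w : ι → MvPolynomial (Fin n) K}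
    (hw : w ∈ frGr s d) : ε w ∈ gr d := by
  rw [lin_apply]
  rw [mem_frGr] at hw
  exact sum_mem fun j _ => hs _ _ _ _ (hw j) (h2 j)

theorem SES.horseshoe {ℓ : ℕ} : ∀ {c : ℕ} {A B C : Type} [AddCommGroup A]
    [Module (MvPolynomial (Fin n) K) A]
    [AddCommGroup B] [Module (MvPolynomial (Fin n) K) B]
    [AddCommGroup C] [Module (MvPolynomial (Fin n) K) C]
    {f : A →ₗ[MvPolynomial (Fin n) K] B} {g : B →ₗ[MvPolynomial (Fin n) K] C}
    {gA : ℕ → AddSubgroup A} {gB : ℕ → AddSubgroup B} {gC : ℕ → AddSubgroup C},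
    SES f g gA gB gC → HasRes n K ℓ c A gA → HasRes n K ℓ c C gC → HasRes n K ℓ c B gB := by
  induction ℓ with
  | zero =>
    intro c A B C _ _ _ _ _ _ f g gA gB gC S hA hC
    have : Subsingleton A := hA
    have : Subsingleton C := hC
    change Subsingleton B
    have h0 : ∀ b : B, b = 0 := by
      intro b
      obtain ⟨a, rfl⟩ := S.exact b (Subsingleton.elim _ _)
      rw [Subsingleton.elim a 0, map_zero]
    exact ⟨fun a b => (h0 a).trans (h0 b).symm⟩
  | succ ℓ ih =>
    intro c A B C _ _ _ _ _ _ f g gA gB gC S hA hC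
    obtain ⟨m, s, εA, a1, a2, a3, a4, a5⟩ := hA
    obtain ⟨m', s', εC, c1, c2, c3, c4, c5⟩ := hC
    choose b hb1 hb2 using fun j => S.lift _ _ (c2 j)
    let β : (Fin m' → MvPolynomial (Fin n) K) →ₗ[MvPolynomial (Fin n) K] B :=
      Fintype.linearCombination (MvPolynomial (Fin n) K) b
    have hβ1 : ∀ j, β (Pi.single j 1) = b j := by
      intro j; simp [β, Fintype.linearCombination_apply_single]
    have hβ2 : ∀ x, g (β x) = εC x := by
      intro x
      rw [lin_apply εC x, lin_apply β x, map_sum]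
      exact Finset.sum_congr rfl fun j _ => by rw [map_smul, hβ1, hb2]
    have hβ3 : ∀ d, ∀ w ∈ frGr s' d, β w ∈ gB d := fun d w hw =>
      eps_mem S.smul s' β (fun j => by rw [hβ1]; exact hb1 j) hw
    let πl : (Fin m ⊕ Fin m' → MvPolynomial (Fin n) K) →ₗ[MvPolynomial (Fin n) K]
      (Fin m → MvPolynomial (Fin n) K) := LinearMap.funLeft _ _ Sum.inl
    let πr : (Fin m ⊕ Fin m' → MvPolynomial (Fin n) K) →ₗ[MvPolynomial (Fin n) K]
      (Fin m' → MvPolynomial (Fin n) K) := LinearMap.funLeft _ _ Sum.inr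
    let ε : (Fin m ⊕ Fin m' → MvPolynomial (Fin n) K) →ₗ[MvPolynomial (Fin n) K] B :=
      f ∘ₗ εA ∘ₗ πl + β ∘ₗ πr
    have hε : ∀ x y, ε (Sum.elim x y) = f (εA x) + β y := fun x y => rfl
    have hgε : ∀ x, g (ε x) = εC (πr x) := by
      intro x
      show g (f (εA (πl x)) + β (πr x)) = _
      rw [map_add, S.comp, zero_add, hβ2]
    have hel : ∀ x, Sum.elim (πl x) (πr x) = x := by
      intro x; ext i; cases i <;> rfl
    refine HasRes.mk' (Sum.elim s s') ε ?_ ?_ ?_ ?_ ?_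
    · rintro (j | j)
      · exact a1 j
      · exact c1 j
    · rintro (j | j)
      · have : (Pi.single (Sum.inl j) 1 : Fin m ⊕ Fin m' → MvPolynomial (Fin n) K) =
          Sum.elim (Pi.single j 1) 0 := by
          ext i; cases i <;> simp [Pi.single_apply]
        rw [this, hε]
        simpa using (S.gf _ _).2 (a2 j)
      · have : (Pi.single (Sum.inr j) 1 : Fin m ⊕ Fin m' → MvPolynomial (Fin n) K) =
          Sum.elim (0 : Fin m → MvPolynomial (Fin n) K) (Pi.single j 1) := by
          ext i; cases i <;> simp [Pi.single_apply]
        rw [this, hε, hβ1]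
        simpa using hb1 j
    · intro y
      obtain ⟨z, hz⟩ := c3 (g y)
      obtain ⟨a, ha⟩ := S.exact (y - β z) (by rw [map_sub, hβ2, hz, sub_self])
      obtain ⟨x, rfl⟩ := a3 a
      exact ⟨Sum.elim x z, by rw [hε, ha]; abel⟩
    · intro d y hy
      obtain ⟨z, hz1, hz⟩ := c4 d (g y) (S.gg _ _ hy)
      obtain ⟨a, ha⟩ := S.exact (y - β z) (by rw [map_sub, hβ2, hz, sub_self])
      have ha' : a ∈ gA d := by
        rw [← S.gf, ha]
        exact sub_mem hy (hβ3 _ _ hz1)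
      obtain ⟨x, hx, rfl⟩ := a4 d a ha'
      refine ⟨Sum.elim x z, ?_, by rw [hε, ha]; abel⟩
      rw [mem_frGr] at *
      rintro (j | j)
      · exact hx j
      · exact hz1 j
    · let i0 : (Fin m → MvPolynomial (Fin n) K) →ₗ[MvPolynomial (Fin n) K]
          (Fin m ⊕ Fin m' → MvPolynomial (Fin n) K) :=
        { toFun := fun x => Sum.elim x 0
          map_add' := by intro x y; ext i; cases i <;> simp
          map_smul' := by intro x y; ext i; cases i <;> simp }
      have hi0 : ∀ x, ε (i0 x) = f (εA x) := by
        intro x; show ε (Sum.elim x 0) = _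
        rw [hε]; simp
      let F : LinearMap.ker εA →ₗ[MvPolynomial (Fin n) K] LinearMap.ker ε :=
        i0.restrict (fun x hx => by
          rw [LinearMap.mem_ker] at *
          rw [hi0, hx, map_zero])
      let G : LinearMap.ker ε →ₗ[MvPolynomial (Fin n) K] LinearMap.ker εC :=
        πr.restrict (fun x hx => by
          rw [LinearMap.mem_ker] at *
          rw [← hgε, hx, map_zero])
      have hF : ∀ x, (F x).1 = Sum.elim x.1 0 := fun x => rfl
      have hG : ∀ x, (G x).1 = πr x.1 := fun x => rfl
      refine ih (f := F) (g := G) ⟨?_, ?_, ?_, ?_, ?_, ?_, ?_, ?_⟩ a5 c5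
      · intro x y hxy
        have := congrArg Subtype.val hxy
        rw [hF, hF] at this
        apply Subtype.ext
        ext1 j
        exact congrFun this (Sum.inl j)
      · intro y hy
        have h1 : πr y.1 = 0 := congrArg Subtype.val hy
        have h2 : Sum.elim (πl y.1) 0 = y.1 := by rw [← h1, hel]
        refine ⟨⟨πl y.1, ?_⟩, Subtype.ext h2⟩
        have h3 := y.2
        rw [LinearMap.mem_ker] at h3 ⊢
        rw [← h2, hε, map_zero, add_zero] at h3
        exact S.inj (by rw [h3, map_zero])
      · intro a
        apply Subtype.ext
        rw [hG, hF]; rfl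
      · intro y
        obtain ⟨a, ha⟩ := S.exact (β y.1) (by rw [hβ2]; exact y.2)
        obtain ⟨x, rfl⟩ := a3 a
        refine ⟨⟨Sum.elim (-x) y.1, ?_⟩, Subtype.ext rfl⟩
        rw [LinearMap.mem_ker, hε, map_neg, map_neg, ha]; simp
      · intro d a
        rw [mem_kerGr, mem_kerGr, hF]
        constructor
        · intro h j; exact h (Sum.inl j)
        · rintro h (j | j)
          · exact h j
          · exact zero_mem _
      · intro d x hx
        rw [mem_kerGr] at *
        intro j
        exact hx (Sum.inr j)
      · intro d y hy
        rw [mem_kerGr] at hy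
        obtain ⟨a, ha⟩ := S.exact (β y.1) (by rw [hβ2]; exact y.2)
        have ha' : a ∈ gA d := by
          rw [← S.gf, ha]; exact hβ3 _ _ (mem_frGr.2 hy)
        obtain ⟨x, hx, rfl⟩ := a4 d a ha'
        refine ⟨⟨Sum.elim (-x) y.1, ?_⟩, ?_, Subtype.ext rfl⟩
        · rw [LinearMap.mem_ker, hε, map_neg, map_neg, ha]; simp
        · rw [mem_frGr] at hx
          rw [mem_kerGr]
          rintro (j | j)
          · exact neg_mem (hx j)
          · exact hy j
      · intro t d p b; exact kerGr_smul _ _ _ _ _ _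

theorem SES.cone {ℓ c : ℕ} {A B C : Type} [AddCommGroup A]
    [Module (MvPolynomial (Fin n) K) A]
    [AddCommGroup B] [Module (MvPolynomial (Fin n) K) B]
    [AddCommGroup C] [Module (MvPolynomial (Fin n) K) C]
    {f : A →ₗ[MvPolynomial (Fin n) K] B} {g : B →ₗ[MvPolynomial (Fin n) K] C}
    {gA : ℕ → AddSubgroup A} {gB : ℕ → AddSubgroup B} {gC : ℕ → AddSubgroup C}
    (S : SES f g gA gB gC) (hA : HasRes n K ℓ (c + 1) A gA) (hB : HasRes n K (ℓ + 1) c B gB) :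
    HasRes n K (ℓ + 1) c C gC := by
  obtain ⟨m, s, ε, b1, b2, b3, b4, b5⟩ := hB
  refine ⟨m, s, g ∘ₗ ε, b1, fun j => S.gg _ _ (b2 j), S.surj.comp b3, ?_, ?_⟩
  · intro d a ha
    obtain ⟨b, hb, rfl⟩ := S.lift d a ha
    obtain ⟨w, hw, rfl⟩ := b4 d b hb
    exact ⟨w, hw, rfl⟩
  · have hex : ∀ x : LinearMap.ker (g ∘ₗ ε), ∃ a, f a = ε x.1 := fun x => S.exact _ x.2
    choose φ hφ using hex
    let G : LinearMap.ker (g ∘ₗ ε) →ₗ[MvPolynomial (Fin n) K] A :=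
      { toFun := φ
        map_add' := by
          intro x y; apply S.inj; rw [map_add, hφ, hφ, hφ]; simp
        map_smul' := by
          intro r x; apply S.inj; simp only [RingHom.id_apply]; rw [map_smul, hφ, hφ]; simp }
    have hG : ∀ x, f (G x) = ε x.1 := hφ
    let F : LinearMap.ker ε →ₗ[MvPolynomial (Fin n) K] LinearMap.ker (g ∘ₗ ε) :=
      Submodule.inclusion (by intro x hx; rw [LinearMap.mem_ker] at *; simp [hx])
    refine SES.horseshoe (f := F) (g := G) ⟨?_, ?_, ?_, ?_, ?_, ?_, ?_, ?_⟩ b5 hA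
    · exact Submodule.inclusion_injective _
    · intro x hx
      refine ⟨⟨x.1, ?_⟩, Subtype.ext rfl⟩
      rw [LinearMap.mem_ker, ← hG, hx, map_zero]
    · intro a; apply S.inj; rw [hG, map_zero]; exact a.2
    · intro a
      obtain ⟨w, hw⟩ := b3 (f a)
      refine ⟨⟨w, ?_⟩, ?_⟩
      · rw [LinearMap.mem_ker, LinearMap.comp_apply, hw, S.comp]
      · apply S.inj; rw [hG, hw]
    · intro d a; rw [mem_kerGr, mem_kerGr]; rfl
    · intro d b hb
      rw [← S.gf, hG]
      exact eps_mem S.smul s ε b2 (mem_frGr.2 (mem_kerGr.1 hb))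
    · intro d a ha
      obtain ⟨w, hw0, hw⟩ := b4 d (f a) ((S.gf _ _).2 ha)
      refine ⟨⟨w, ?_⟩, ?_, ?_⟩
      · rw [LinearMap.mem_ker, LinearMap.comp_apply, hw, S.comp]
      · rw [mem_kerGr]; exact mem_frGr.1 hw0
      · apply S.inj; rw [hG, hw]
    · intro t d p b; exact kerGr_smul _ _ _ _ _ _

/-- Shifted grading. -/
def shGr {M : Type} [AddCommGroup M] (gr : ℕ → AddSubgroup M) : ℕ → AddSubgroup M
  | 0 => ⊥
  | d + 1 => gr d

theorem hp_succ_zero (s : ℕ) (p : MvPolynomial (Fin n) K) : p ∈ hp n K (s + 1) 0 ↔ p = 0 := by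
  rw [mem_hp]; constructor
  · rintro (h | ⟨h, _⟩)
    · exact h
    · omega
  · exact Or.inl

theorem hp_succ_succ (s d : ℕ) (p : MvPolynomial (Fin n) K) :
    p ∈ hp n K (s + 1) (d + 1) ↔ p ∈ hp n K s d := by
  rw [mem_hp, mem_hp]; simp

theorem HasRes.shift {ℓ : ℕ} : ∀ {c : ℕ} {M : Type} [AddCommGroup M]
    [Module (MvPolynomial (Fin n) K) M] {gr : ℕ → AddSubgroup M},
    HasRes n K ℓ c M gr → HasRes n K ℓ (c + 1) M (shGr gr) := by
  induction ℓ with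
  | zero => intro c M _ _ gr h; exact h
  | succ ℓ ih =>
    intro c M _ _ gr h
    obtain ⟨m, s, ε, h1, h2, h3, h4, h5⟩ := h
    refine ⟨m, fun j => s j + 1, ε, fun j => Nat.succ_le_succ (h1 j), h2, h3, ?_, ?_⟩
    · intro d a ha
      cases d with
      | zero =>
        have : a = 0 := ha
        exact ⟨0, zero_mem _, by rw [this, map_zero]⟩
      | succ d =>
        obtain ⟨w, hw, rfl⟩ := h4 d a ha
        refine ⟨w, ?_, rfl⟩
        rw [mem_frGr] at *
        intro j
        rw [hp_succ_succ]; exact hw j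
    · have := ih h5
      refine HasRes.iso (LinearEquiv.refl _ _) ?_ this
      intro d x
      cases d with
      | zero =>
        rw [mem_kerGr]
        simp only [hp_succ_zero]
        constructor
        · intro h
          show x = 0
          apply Subtype.ext; ext1 j; exact h j
        · intro h j
          have : x = 0 := h
          simp [this]
      | succ d =>
        show _ ↔ x ∈ kerGr s _ d
        rw [mem_kerGr, mem_kerGr]
        simp only [hp_succ_succ]; rfl

end Horseshoe
end SCMB

namespace SCMB

section Mono

variable {n : ℕ} {K : Type} [Field K]

/-- The squarefree monomial ideal attached to an upper set of supports. -/
noncomputable def sqI (K : Type) [Field K] (S : Set (Finset (Fin n))) (hS : IsUpperSet S) :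
    Ideal (MvPolynomial (Fin n) K) where
  carrier := {p | ∀ m, coeff m p ≠ 0 → m.support ∈ S}
  zero_mem' := by intro m hm; simp at hm
  add_mem' := by
    intro a b ha hb m hm
    rw [coeff_add] at hm
    by_cases h : coeff m a = 0
    · exact hb m (by intro h2; simp [h, h2] at hm)
    · exact ha m h
  smul_mem' := by
    intro c p hp' m hm
    rw [smul_eq_mul, coeff_mul] at hm
    obtain ⟨⟨i, j⟩, hij, e⟩ := Finset.exists_ne_zero_of_sum_ne_zero hm
    have hj : coeff j p ≠ 0 := right_ne_zero_of_mul e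
    refine hS ?_ (hp' j hj)
    rw [Finset.HasAntidiagonal.mem_antidiagonal] at hij
    rw [← hij]
    intro v hv
    simp only [Finsupp.mem_support_iff, Finsupp.add_apply] at *
    omega

theorem mem_sqI {S : Set (Finset (Fin n))} {hS : IsUpperSet S} {p : MvPolynomial (Fin n) K} :
    p ∈ sqI K S hS ↔ ∀ m, coeff m p ≠ 0 → m.support ∈ S := Iff.rfl

theorem sqI_hom (S : Set (Finset (Fin n))) (hS : IsUpperSet S) : IsHomI (sqI K S hS) := by
  intro p hp' d m hm
  apply hp' m
  rw [coeff_homogeneousComponent] at hm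
  split_ifs at hm with h
  · exact hm
  · exact absurd rfl hm

theorem sqI_congr {S T : Set (Finset (Fin n))} (h : S = T) (hS : IsUpperSet S) (hT : IsUpperSet T) :
    sqI K S hS = sqI K T hT := by subst h; rfl

/-- colon by a variable -/
def colS (S : Set (Finset (Fin n))) (y : Fin n) : Set (Finset (Fin n)) := {T | insert y T ∈ S}
/-- adding a variable -/
def addS (S : Set (Finset (Fin n))) (y : Fin n) : Set (Finset (Fin n)) := {T | T ∈ S ∨ y ∈ T}

theorem colS_up {S : Set (Finset (Fin n))} (hS : IsUpperSet S) (y : Fin n) :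
    IsUpperSet (colS S y) := fun _ _ hab ha => hS (Finset.insert_subset_insert _ hab) ha
theorem addS_up {S : Set (Finset (Fin n))} (hS : IsUpperSet S) (y : Fin n) :
    IsUpperSet (addS S y) := fun _ _ hab ha => ha.imp (hS hab) (fun h => hab h)

theorem supp_add_single (m : Fin n →₀ ℕ) (y : Fin n) :
    (m + Finsupp.single y 1).support = insert y m.support := by
  ext v
  simp only [Finsupp.mem_support_iff, Finsupp.add_apply, Finset.mem_insert, Finsupp.single_apply]
  by_cases h : y = v
  · simp [h]
  · simp [h, Ne.symm h]

theorem mul_X_mem {S : Set (Finset (Fin n))} (hS : IsUpperSet S) (y : Fin n)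
    (p : MvPolynomial (Fin n) K) : p * X y ∈ sqI K S hS ↔ p ∈ sqI K (colS S y) (colS_up hS y) := by
  rw [mem_sqI, mem_sqI]
  constructor
  · intro h m hm
    have := h (m + Finsupp.single y 1) (by rwa [coeff_mul_X])
    rwa [supp_add_single] at this
  · intro h m hm
    rw [coeff_mul_X'] at hm
    split_ifs at hm with hy
    · have := h _ hm
      have h2 : m = (m - Finsupp.single y 1) + Finsupp.single y 1 := by
        rw [tsub_add_cancel_of_le]
        simpa [Finsupp.single_le_iff, Nat.one_le_iff_ne_zero] using hy
      rw [h2, supp_add_single]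
      exact this
    · exact absurd rfl hm

theorem mem_addS {S : Set (Finset (Fin n))} (hS : IsUpperSet S) (y : Fin n)
    (p : MvPolynomial (Fin n) K) :
    p ∈ sqI K (addS S y) (addS_up hS y) ↔ ∃ q, p - q * X y ∈ sqI K S hS := by
  constructor
  · intro h
    refine ⟨p.divMonomial (Finsupp.single y 1), ?_⟩
    rw [mem_sqI]
    intro m hm
    have hd : p - p.divMonomial (Finsupp.single y 1) * X y = p.modMonomial (Finsupp.single y 1) := by
      rw [sub_eq_iff_eq_add, add_comm, mul_comm]
      exact (divMonomial_add_modMonomial_single p y).symm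
    rw [hd] at hm
    by_cases hle : Finsupp.single y 1 ≤ m
    · rw [coeff_modMonomial_of_le _ hle] at hm; exact absurd rfl hm
    · rw [coeff_modMonomial_of_not_le _ hle] at hm
      rcases h m hm with h1 | h1
      · exact h1
      · exact absurd (by simpa [Finsupp.single_le_iff, Nat.one_le_iff_ne_zero] using h1) hle
  · rintro ⟨q, hq⟩
    have h1 : p - q * X y ∈ sqI K (addS S y) (addS_up hS y) := fun m hm => Or.inl (hq m hm)
    have h2 : q * X y ∈ sqI K (addS S y) (addS_up hS y) := by
      rw [mul_X_mem]
      intro m _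
      exact Or.inr (Finset.mem_insert_self _ _)
    simpa using add_mem h1 h2

theorem X_mem_hp (y : Fin n) : (X y : MvPolynomial (Fin n) K) ∈ hp n K 0 1 :=
  Or.inr ⟨by omega, isHomogeneous_X _ _⟩

theorem hc_zero_mul_X (d : ℕ) (y : Fin n) (p : MvPolynomial (Fin n) K) :
    hc 0 d (p * X y) = hc 1 d p * X y := hc_mul _ _ (X_mem_hp y)

/-- multiplication by `X y` -/
noncomputable def mulXmap {S : Set (Finset (Fin n))} (hS : IsUpperSet S) (y : Fin n) :
    (MvPolynomial (Fin n) K ⧸ sqI K (colS S y) (colS_up hS y)) →ₗ[MvPolynomial (Fin n) K]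
    (MvPolynomial (Fin n) K ⧸ sqI K S hS) :=
  Submodule.mapQ _ _ (LinearMap.mulRight (MvPolynomial (Fin n) K) (X y))
    (fun p hp' => by
      rw [Submodule.mem_comap, LinearMap.mulRight_apply, mul_X_mem]; exact hp')

theorem mulXmap_mk {S : Set (Finset (Fin n))} (hS : IsUpperSet S) (y : Fin n)
    (p : MvPolynomial (Fin n) K) :
    mulXmap hS y (Ideal.Quotient.mk _ p) = Ideal.Quotient.mk _ (p * X y) := rfl

noncomputable def addmap {S : Set (Finset (Fin n))} (hS : IsUpperSet S) (y : Fin n) :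
    (MvPolynomial (Fin n) K ⧸ sqI K S hS) →ₗ[MvPolynomial (Fin n) K]
    (MvPolynomial (Fin n) K ⧸ sqI K (addS S y) (addS_up hS y)) :=
  Submodule.mapQ _ _ LinearMap.id (fun _ hp' m hm => Or.inl (hp' m hm))

theorem addmap_mk {S : Set (Finset (Fin n))} (hS : IsUpperSet S) (y : Fin n)
    (p : MvPolynomial (Fin n) K) :
    addmap hS y (Ideal.Quotient.mk _ p) = Ideal.Quotient.mk _ p := rfl

theorem grQ_smul (I : Ideal (MvPolynomial (Fin n) K)) (t d : ℕ) (p : MvPolynomial (Fin n) K)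
    (b : MvPolynomial (Fin n) K ⧸ I) (hp' : p ∈ hp n K t d) (hb : b ∈ grQ I t) :
    p • b ∈ grQ I d := by
  obtain ⟨q, hq, rfl⟩ := hb
  exact ⟨p * q, mul_mem_hp hp' hq, rfl⟩

theorem sqSES {S : Set (Finset (Fin n))} (hS : IsUpperSet S) (y : Fin n) :
    SES (mulXmap (K := K) hS y) (addmap hS y) (shGr (grQ _)) (grQ _) (grQ _) := by
  refine ⟨?_, ?_, ?_, ?_, ?_, ?_, ?_, ?_⟩
  · rw [injective_iff_map_eq_zero]
    intro a ha
    obtain ⟨p, rfl⟩ := Ideal.Quotient.mk_surjective a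
    rw [mulXmap_mk, Ideal.Quotient.eq_zero_iff_mem, mul_X_mem] at ha
    rwa [Ideal.Quotient.eq_zero_iff_mem]
  · intro b hb
    obtain ⟨p, rfl⟩ := Ideal.Quotient.mk_surjective b
    rw [addmap_mk, Ideal.Quotient.eq_zero_iff_mem, mem_addS] at hb
    obtain ⟨q, hq⟩ := hb
    exact ⟨Ideal.Quotient.mk _ q, by rw [mulXmap_mk]; exact (Ideal.Quotient.eq.2 hq).symm⟩
  · intro a
    obtain ⟨p, rfl⟩ := Ideal.Quotient.mk_surjective a
    rw [mulXmap_mk, addmap_mk, Ideal.Quotient.eq_zero_iff_mem, mem_addS hS]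
    exact ⟨p, by simp⟩
  · intro a
    obtain ⟨p, rfl⟩ := Ideal.Quotient.mk_surjective a
    exact ⟨Ideal.Quotient.mk _ p, addmap_mk _ _ _⟩
  · intro d a
    obtain ⟨p, rfl⟩ := Ideal.Quotient.mk_surjective a
    rw [mulXmap_mk]
    constructor
    · rintro ⟨q, hq, hqp⟩
      have h1 : q - p * X y ∈ sqI K S hS := Ideal.Quotient.eq.1 hqp
      have h2 := (sqI_hom S hS).hc_mem h1 0 d
      rw [hc_sub, hc_of_mem hq, hc_zero_mul_X] at h2
      have h3 := sub_mem h2 h1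
      rw [sub_sub_sub_cancel_left, ← sub_mul, mul_X_mem] at h3
      have h4 := Ideal.Quotient.eq.2 h3
      cases d with
      | zero =>
        rw [h4]
        have : hc 1 0 p = 0 := by simp [hc]
        rw [this, map_zero]; exact zero_mem _
      | succ d =>
        rw [h4]
        exact ⟨_, (hp_succ_succ 0 d _).1 (hc_mem _ _ _), rfl⟩
    · intro h
      cases d with
      | zero =>
        have h1 : Ideal.Quotient.mk (sqI K (colS S y) (colS_up hS y)) p = 0 := h
        rw [← mulXmap_mk, h1, map_zero]; exact zero_mem _
      | succ d =>
        obtain ⟨q, hq, hqp⟩ := (show _ ∈ grQ _ d from h)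
        have hqp' : Ideal.Quotient.mk (sqI K (colS S y) (colS_up hS y)) q =
          Ideal.Quotient.mk _ p := hqp
        rw [← mulXmap_mk, ← hqp', mulXmap_mk]
        refine ⟨q * X y, mul_mem_hp (t := 1) ((hp_succ_succ 0 d _).2 hq) (X_mem_hp y), rfl⟩
  · rintro d b ⟨q, hq, rfl⟩
    exact ⟨q, hq, rfl⟩
  · rintro d c ⟨q, hq, rfl⟩
    exact ⟨Ideal.Quotient.mk _ q, ⟨q, hq, rfl⟩, rfl⟩
  · intro t d p b; exact grQ_smul _ t d p b

def RB (K : Type) [Field K] (c : ℕ) (S : Set (Finset (Fin n))) : Prop :=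
  ∃ hS : IsUpperSet S, ∃ ℓ, HasRes n K ℓ c (MvPolynomial (Fin n) K ⧸ sqI K S hS) (grQ _)

theorem RB.mono {c c' : ℕ} (h : c ≤ c') {S : Set (Finset (Fin n))} (hS : RB K c S) : RB K c' S := by
  obtain ⟨h1, ℓ, h2⟩ := hS
  exact ⟨h1, ℓ, h2.mono h⟩

theorem RB.step {c : ℕ} {S : Set (Finset (Fin n))} (hS : IsUpperSet S) (y : Fin n)
    (h1 : RB K c (colS S y)) (h2 : RB K (c + 1) (addS S y)) : RB K (c + 1) S := by
  obtain ⟨_, ℓ1, h1⟩ := h1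
  obtain ⟨_, ℓ2, h2⟩ := h2
  exact ⟨hS, max ℓ1 ℓ2, (sqSES hS y).horseshoe (h1.mono_len (le_max_left _ _)).shift
    (h2.mono_len (le_max_right _ _))⟩

theorem RB.cone {c : ℕ} {S : Set (Finset (Fin n))} (y : Fin n) (hy : colS S y = S)
    (h1 : RB K c S) : RB K c (addS S y) := by
  have h1' := h1
  rw [← hy] at h1'
  obtain ⟨hS, ℓ1, h1⟩ := h1
  obtain ⟨_, ℓ2, h2⟩ := h1'
  exact ⟨addS_up hS y, _, (sqSES hS y).cone
    (h2.mono_len (le_max_right ℓ1 ℓ2)).shift (h1.mono_len (le_max_left ℓ1 ℓ2)).succ⟩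

theorem RB.base : RB K 0 (∅ : Set (Finset (Fin n))) := by
  refine ⟨isUpperSet_empty, 1, ?_⟩
  refine HasRes.mk' (ι := Unit) (fun _ => 0) ((Submodule.mkQ _) ∘ₗ LinearMap.proj ()) ?_ ?_ ?_ ?_ ?_
  · intro; rfl
  · intro j
    exact ⟨1, Or.inr ⟨le_rfl, isHomogeneous_one _ _⟩, by simp⟩
  · intro a
    obtain ⟨p, rfl⟩ := Ideal.Quotient.mk_surjective a
    exact ⟨fun _ => p, rfl⟩
  · rintro d a ⟨p, hp', rfl⟩
    exact ⟨fun _ => p, mem_frGr.2 fun _ => hp', rfl⟩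
  · change Subsingleton _
    have h0 : ∀ x : LinearMap.ker ((Submodule.mkQ (sqI K (∅ : Set (Finset (Fin n)))
        isUpperSet_empty)) ∘ₗ LinearMap.proj (φ := fun _ : Unit => MvPolynomial (Fin n) K) ()),
        x = 0 := by
      rintro ⟨x, hx⟩
      apply Subtype.ext
      ext1 ⟨⟩
      have : x () ∈ sqI K (∅ : Set (Finset (Fin n))) isUpperSet_empty := by
        rw [← Ideal.Quotient.eq_zero_iff_mem]; exact hx
      ext m
      by_contra hne
      exact this m (by simpa using hne)
    exact ⟨fun a b => (h0 a).trans (h0 b).symm⟩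

theorem RB.vars (W : Finset (Fin n)) : RB K 0 {T : Finset (Fin n) | ∃ w ∈ W, w ∈ T} := by
  induction W using Finset.induction_on with
  | empty =>
    have : {T : Finset (Fin n) | ∃ w ∈ (∅ : Finset (Fin n)), w ∈ T} = ∅ := by ext; simp
    rw [this]; exact RB.base
  | insert y W hy ih =>
    have h1 := RB.cone y (by
      ext T
      simp only [colS, Set.mem_ofPred_eq, Finset.mem_insert]
      constructor
      · rintro ⟨w, hw, rfl | h⟩
        · exact absurd hw hy
        · exact ⟨w, hw, h⟩
      · rintro ⟨w, hw, h⟩; exact ⟨w, hw, Or.inr h⟩) ih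
    convert h1 using 1
    ext T
    simp only [addS, Set.mem_ofPred_eq, Finset.mem_insert]
    constructor
    · rintro ⟨w, rfl | hw, h⟩
      · exact Or.inr h
      · exact Or.inl ⟨w, hw, h⟩
    · rintro (⟨w, hw, h⟩ | h)
      · exact ⟨w, Or.inr hw, h⟩
      · exact ⟨y, Or.inl rfl, h⟩

end Mono
end SCMB

namespace SCMB

section Graph

variable {n : ℕ} {K : Type} [Field K]

theorem im_mem {r : ℕ} (f : Fin r → Fin n × Fin n) (u : Fin n) :
    u ∈ Finset.univ.biUnion (fun i => ({(f i).1, (f i).2} : Finset (Fin n))) ↔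
      ∃ i, u = (f i).1 ∨ u = (f i).2 := by simp

/-- All induced matchings inside `U` have size at most `c`. -/
def MB (G : SimpleGraph (Fin n)) (U : Finset (Fin n)) (c : ℕ) : Prop :=
  ∀ (r : ℕ) (f : Fin r → Fin n × Fin n), G.IsInducedMatching f →
    (∀ i, (f i).1 ∈ U ∧ (f i).2 ∈ U) → r ≤ c

theorem MB.mono {G : SimpleGraph (Fin n)} {U U' : Finset (Fin n)} {c : ℕ} (h : MB G U c)
    (hU : U' ⊆ U) : MB G U' c := fun r f hf hU' =>
  h r f hf fun i => ⟨hU (hU' i).1, hU (hU' i).2⟩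

theorem im_cons {G : SimpleGraph (Fin n)} {U : Finset (Fin n)} {x y : Fin n}
    (hx : x ∈ U) (hxy : G.Adj x y) (hl : ∀ z ∈ U, G.Adj x z → z = y)
    {r : ℕ} {f : Fin r → Fin n × Fin n} (hf : G.IsInducedMatching f)
    (hU : ∀ i, ∀ z, (z = (f i).1 ∨ z = (f i).2) → z ∈ U ∧ z ≠ y ∧ ¬ G.Adj y z) :
    G.IsInducedMatching (Fin.cons (x, y) f : Fin (r + 1) → Fin n × Fin n) := by
  have hno : ∀ i z, (z = (f i).1 ∨ z = (f i).2) → ¬ G.Adj x z ∧ z ≠ x ∧ ¬ G.Adj y z ∧ z ≠ y := by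
    intro i z hz
    obtain ⟨h1, h2, h3⟩ := hU i z hz
    refine ⟨fun h => h2 (hl z h1 h), ?_, h3, h2⟩
    rintro rfl
    exact h3 hxy.symm
  obtain ⟨f1, f2, f3⟩ := hf
  refine ⟨?_, ?_, ?_⟩
  · intro i
    refine Fin.cases ?_ ?_ i
    · exact hxy
    · intro i; exact f1 i
  · have hd : ∀ j, Disjoint ({x, y} : Finset (Fin n)) {(f j).1, (f j).2} := by
      intro j
      rw [Finset.disjoint_left]
      intro z hz hz2
      simp only [Finset.mem_insert, Finset.mem_singleton] at hz hz2
      have := hno j z hz2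
      rcases hz with h | h
      · exact this.2.1 h
      · exact this.2.2.2 h
    intro i j
    refine Fin.cases ?_ ?_ i
    · refine Fin.cases ?_ ?_ j
      · intro h; exact absurd rfl h
      · intro j _; exact hd j
    · intro i
      refine Fin.cases ?_ ?_ j
      · intro _; exact (hd i).symm
      · intro j hij; exact f2 i j (fun h => hij (by rw [h]))
  · intro u v huv hu hv
    rw [im_mem] at hu hv
    obtain ⟨i, hi⟩ := hu
    obtain ⟨j, hj⟩ := hv
    revert hi hj
    refine Fin.cases ?_ ?_ i
    · refine Fin.cases ?_ ?_ j
      · intro hi hj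
        refine ⟨0, ?_⟩
        simp only [Fin.cons_zero] at hi hj ⊢
        rcases hi with rfl | rfl <;> rcases hj with rfl | rfl
        · exact absurd huv (G.loopless.irrefl _)
        · rfl
        · exact Finset.pair_comm _ _
        · exact absurd huv (G.loopless.irrefl _)
      · intro j hi hj
        simp only [Fin.cons_zero, Fin.cons_succ] at hi hj
        have := hno j v hj
        rcases hi with rfl | rfl
        · exact absurd huv this.1
        · exact absurd huv this.2.2.1
    · intro i
      refine Fin.cases ?_ ?_ j
      · intro hi hj
        simp only [Fin.cons_zero, Fin.cons_succ] at hi hj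
        have := hno i u hi
        rcases hj with rfl | rfl
        · exact absurd huv.symm this.1
        · exact absurd huv.symm this.2.2.1
      · intro j hi hj
        obtain ⟨k, hk⟩ := f3 u v huv ((im_mem f u).2 ⟨i, hi⟩) ((im_mem f v).2 ⟨j, hj⟩)
        exact ⟨k.succ, hk⟩

/-- supports attached to `J(U,W)` -/
def JS (G : SimpleGraph (Fin n)) (U W : Finset (Fin n)) : Set (Finset (Fin n)) :=
  {T | (∃ w ∈ W, w ∈ T) ∨ ∃ u ∈ U, ∃ v ∈ U, G.Adj u v ∧ u ∈ T ∧ v ∈ T}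

theorem JS_up (G : SimpleGraph (Fin n)) (U W : Finset (Fin n)) : IsUpperSet (JS G U W) := by
  rintro S T hST (⟨w, hw, h⟩ | ⟨u, hu, v, hv, h, h1, h2⟩)
  · exact Or.inl ⟨w, hw, hST h⟩
  · exact Or.inr ⟨u, hu, v, hv, h, hST h1, hST h2⟩

/-- The set of vertices not in the closed neighbourhood of `σ`. -/
def IsLk (G : SimpleGraph (Fin n)) (σ U : Finset (Fin n)) : Prop :=
  ∀ x, x ∈ U ↔ x ∉ σ ∧ ∀ w ∈ σ, ¬ G.Adj w x

def Indep (G : SimpleGraph (Fin n)) (σ : Finset (Fin n)) : Prop :=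
  ∀ u ∈ σ, ∀ v ∈ σ, ¬ G.Adj u v

/-- every link with an edge has a leaf -/
def LeafHyp (G : SimpleGraph (Fin n)) : Prop :=
  ∀ σ U, Indep G σ → IsLk G σ U → (∃ u ∈ U, ∃ v ∈ U, G.Adj u v) →
    ∃ x ∈ U, ∃ y ∈ U, G.Adj x y ∧ ∀ z ∈ U, G.Adj x z → z = y

theorem indep_insert {G : SimpleGraph (Fin n)} {σ U : Finset (Fin n)} (hσ : Indep G σ)
    (hU : IsLk G σ U) {x : Fin n} (hx : x ∈ U) : Indep G (insert x σ) := by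
  intro u hu v hv h
  have hx' := (hU x).1 hx
  rw [Finset.mem_insert] at hu hv
  rcases hu with rfl | hu <;> rcases hv with rfl | hv
  · exact G.loopless.irrefl _ h
  · exact hx'.2 v hv h.symm
  · exact hx'.2 u hu h
  · exact hσ u hu v hv h

theorem upper_aux {G : SimpleGraph (Fin n)} (hL : LeafHyp G) (k : ℕ) :
    ∀ (σ U W : Finset (Fin n)) (c : ℕ), U.card = k → Indep G σ → IsLk G σ U → Disjoint U W →
      MB G U c → RB K c (JS G U W) := by
  classical
  induction k using Nat.strong_induction_on with
  | _ k ih =>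
  intro σ U W c hk hσ hU hd hM
  by_cases hE : ∃ u ∈ U, ∃ v ∈ U, G.Adj u v
  swap
  · have := (RB.vars (K := K) W).mono (Nat.zero_le c)
    convert this using 1
    ext T
    constructor
    · rintro (h | ⟨u, hu, v, hv, h, _⟩)
      · exact h
      · exact absurd ⟨u, hu, v, hv, h⟩ hE
    · exact Or.inl
  obtain ⟨x, hx, y, hy, hxy, hl⟩ := hL σ U hσ hU hE
  have hyW : y ∉ W := Finset.disjoint_left.1 hd hy
  have hne : x ≠ y := G.ne_of_adj hxy
  obtain ⟨c, rfl⟩ : ∃ c', c = c' + 1 := by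
    have : 1 ≤ c := by
      refine hM 1 (Fin.cons (x, y) Fin.elim0) (im_cons hx hxy hl (r := 0) ?_ ?_) ?_
      · exact ⟨fun i => i.elim0, fun i => i.elim0, fun u v _ hu => by simp at hu⟩
      · intro i; exact i.elim0
      · intro i
        refine Fin.cases ⟨hx, hy⟩ (fun i => i.elim0) i
    exact ⟨c - 1, by omega⟩
  refine RB.step (JS_up G U W) y ?_ ?_
  · have h1 : colS (JS G U W) y =
        JS G (U.filter fun z => z ≠ y ∧ ¬ G.Adj y z) (W ∪ U.filter fun z => G.Adj y z) := by
      ext T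
      constructor
      · rintro (⟨w, hw, h⟩ | ⟨u, hu, v, hv, h, h1, h2⟩)
        · rw [Finset.mem_insert] at h
          rcases h with rfl | h
          · exact absurd hw hyW
          · exact Or.inl ⟨w, Finset.mem_union_left _ hw, h⟩
        · rw [Finset.mem_insert] at h1 h2
          by_cases hyu : G.Adj y u
          · rcases h1 with rfl | h1
            · exact absurd hyu (G.loopless.irrefl _)
            · exact Or.inl ⟨u, Finset.mem_union_right _ (by simp [hu, hyu]), h1⟩
          by_cases hyv : G.Adj y v
          · rcases h2 with rfl | h2
            · exact absurd hyv (G.loopless.irrefl _)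
            · exact Or.inl ⟨v, Finset.mem_union_right _ (by simp [hv, hyv]), h2⟩
          have hu' : u ≠ y := by rintro rfl; exact hyv h
          have hv' : v ≠ y := by rintro rfl; exact hyu h.symm
          exact Or.inr ⟨u, by simp [hu, hu', hyu], v, by simp [hv, hv', hyv], h,
            h1.resolve_left hu', h2.resolve_left hv'⟩
      · rintro (⟨w, hw, h⟩ | ⟨u, hu, v, hv, h, h1, h2⟩)
        · rw [Finset.mem_union, Finset.mem_filter] at hw
          rcases hw with hw | ⟨hw, hw2⟩
          · exact Or.inl ⟨w, hw, Finset.mem_insert_of_mem h⟩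
          · exact Or.inr ⟨y, hy, w, hw, hw2, Finset.mem_insert_self _ _,
              Finset.mem_insert_of_mem h⟩
        · exact Or.inr ⟨u, Finset.mem_of_mem_filter _ hu, v, Finset.mem_of_mem_filter _ hv, h,
            Finset.mem_insert_of_mem h1, Finset.mem_insert_of_mem h2⟩
    rw [h1]
    refine ih _ ?_ (insert y σ) _ _ _ rfl (indep_insert hσ hU hy) ?_ ?_ ?_
    · rw [← hk]
      apply Finset.card_lt_card
      refine Finset.filter_ssubset.2 ⟨y, hy, by simp⟩
    · intro z
      rw [Finset.mem_filter, hU z, Finset.mem_insert, Finset.forall_mem_insert]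
      tauto
    · rw [Finset.disjoint_union_right]
      refine ⟨hd.mono_left (Finset.filter_subset _ _), ?_⟩
      rw [Finset.disjoint_left]
      intro z hz hz2
      rw [Finset.mem_filter] at hz hz2
      exact hz.2.2 hz2.2
    · intro r f hf hfU
      have h2 := hM (r + 1) (Fin.cons (x, y) f) (im_cons hx hxy hl hf ?_) ?_
      · omega
      · rintro i z (rfl | rfl)
        · simpa using (hfU i).1
        · simpa using (hfU i).2
      · intro i
        refine Fin.cases ⟨hx, hy⟩ (fun i => ?_) i
        exact ⟨Finset.mem_of_mem_filter _ (hfU i).1, Finset.mem_of_mem_filter _ (hfU i).2⟩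
  · have h1 : addS (JS G U W) y =
        JS G (U.filter fun z => z ≠ x ∧ z ≠ y) (insert y W) := by
      ext T
      constructor
      · rintro ((⟨w, hw, h⟩ | ⟨u, hu, v, hv, h, h1, h2⟩) | h)
        · exact Or.inl ⟨w, Finset.mem_insert_of_mem hw, h⟩
        · by_cases hyT : y ∈ T
          · exact Or.inl ⟨y, Finset.mem_insert_self _ _, hyT⟩
          have hu' : u ≠ y := by rintro rfl; exact hyT h1
          have hv' : v ≠ y := by rintro rfl; exact hyT h2
          have hux : u ≠ x := by rintro rfl; exact hv' (hl v hv h)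
          have hvx : v ≠ x := by rintro rfl; exact hu' (hl u hu h.symm)
          exact Or.inr ⟨u, by simp [hu, hu', hux], v, by simp [hv, hv', hvx], h, h1, h2⟩
        · exact Or.inl ⟨y, Finset.mem_insert_self _ _, h⟩
      · rintro (⟨w, hw, h⟩ | ⟨u, hu, v, hv, h, h1, h2⟩)
        · rcases Finset.mem_insert.1 hw with rfl | hw
          · exact Or.inr h
          · exact Or.inl (Or.inl ⟨w, hw, h⟩)
        · exact Or.inl (Or.inr ⟨u, Finset.mem_of_mem_filter _ hu, v,
            Finset.mem_of_mem_filter _ hv, h, h1, h2⟩)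
    rw [h1]
    refine ih _ ?_ (insert x σ) _ _ _ rfl (indep_insert hσ hU hx) ?_ ?_ ?_
    · rw [← hk]
      apply Finset.card_lt_card
      refine Finset.filter_ssubset.2 ⟨y, hy, by simp⟩
    · intro z
      rw [Finset.mem_filter, Finset.mem_insert, Finset.forall_mem_insert]
      constructor
      · rintro ⟨hz, hzx, hzy⟩
        have := (hU z).1 hz
        exact ⟨by tauto, fun h => hzy (hl z hz h), this.2⟩
      · rintro ⟨h1, h2, h3⟩
        rw [not_or] at h1
        refine ⟨(hU z).2 ⟨h1.2, h3⟩, h1.1, ?_⟩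
        rintro rfl
        exact h2 hxy
    · rw [Finset.disjoint_left] at hd ⊢
      intro z hz hz2
      rw [Finset.mem_filter] at hz
      rcases Finset.mem_insert.1 hz2 with h | h
      · exact hz.2.2 h
      · exact hd hz.1 h
    · exact hM.mono (Finset.filter_subset _ _)

theorem graphIdeal_eq (G : SimpleGraph (Fin n)) :
    graphIdeal K G = sqI K (JS G Finset.univ ∅) (JS_up _ _ _) := by
  have h1 : {m : MvPolynomial (Fin n) K | ∃ u v, G.Adj u v ∧ m = X u * X v} =
      (fun s => monomial s (1 : K)) '' {s | ∃ u v, G.Adj u v ∧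
        s = Finsupp.single u 1 + Finsupp.single v 1} := by
    ext m
    constructor
    · rintro ⟨u, v, h, rfl⟩
      exact ⟨_, ⟨u, v, h, rfl⟩, by simp [X, monomial_mul]⟩
    · rintro ⟨_, ⟨u, v, h, rfl⟩, rfl⟩
      exact ⟨u, v, h, by simp [X, monomial_mul]⟩
  ext p
  rw [graphIdeal, h1, mem_ideal_span_monomial_image, mem_sqI]
  have h2 : ∀ m : Fin n →₀ ℕ, (∃ si ∈ {s | ∃ u v, G.Adj u v ∧
        s = Finsupp.single u 1 + Finsupp.single v 1}, si ≤ m) ↔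
        m.support ∈ JS G Finset.univ ∅ := by
    intro m
    constructor
    · rintro ⟨_, ⟨u, v, h, rfl⟩, hle⟩
      refine Or.inr ⟨u, Finset.mem_univ _, v, Finset.mem_univ _, h, ?_, ?_⟩
      · have := hle u
        simp at this ⊢; omega
      · have := hle v
        simp at this ⊢; omega
    · rintro (⟨w, hw, _⟩ | ⟨u, hu, v, hv, h, h1, h2⟩)
      · simp at hw
      · refine ⟨_, ⟨u, v, h, rfl⟩, ?_⟩
        intro z
        have huv := G.ne_of_adj h
        simp only [Finsupp.mem_support_iff] at h1 h2
        simp only [Finsupp.add_apply, Finsupp.single_apply]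
        split_ifs with h3 h4
        · exact absurd (h3.trans h4.symm) huv
        · subst h3; omega
        · subst_vars; omega
        · omega
  simp only [h2, mem_support_iff]

theorem graph_upper {G : SimpleGraph (Fin n)} (hL : LeafHyp G) {c : ℕ}
    (hM : MB G Finset.univ c) :
    ∃ F : GFR n K (graphIdeal K G), ∀ (i : ℕ) (j : Fin (F.rk i)), F.tw i j ≤ c + i := by
  obtain ⟨hS, ℓ, h⟩ := upper_aux (K := K) hL _ ∅ Finset.univ ∅ c rfl
    (by intro u hu; simp at hu) (by intro x; simp) (by simp) hM
  rw [graphIdeal_eq]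
  exact h.toGFR

end Graph
end SCMB

namespace SCMB

section Koszul

variable {n : ℕ} {K : Type} [Field K]

/-- Koszul sign -/
def sg (ρ : Fin n → ℕ) (T : Finset (Fin n)) (v : Fin n) : ℤ :=
  (-1) ^ (T.filter fun w => ρ w < ρ v).card

theorem sg_insert (ρ : Fin n → ℕ) {T : Finset (Fin n)} {u : Fin n} (hu : u ∉ T) (v : Fin n) :
    sg ρ (insert u T) v = (if ρ u < ρ v then -1 else 1) * sg ρ T v := by
  unfold sg
  rw [Finset.filter_insert]
  split_ifs with h
  · rw [Finset.card_insert_of_notMem (by simp [hu]), pow_succ]; ring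
  · ring

/-- Koszul differential -/
noncomputable def KD (ρ : Fin n → ℕ) {M : Type} [AddCommGroup M]
    [Module (MvPolynomial (Fin n) K) M]
    (z : Finset (Fin n) → M) (T : Finset (Fin n)) : M :=
  ∑ v, if v ∈ T then 0 else sg ρ T v • (X v : MvPolynomial (Fin n) K) • z (insert v T)

variable {M : Type} [AddCommGroup M] [Module (MvPolynomial (Fin n) K) M]
  {N : Type} [AddCommGroup N] [Module (MvPolynomial (Fin n) K) N]

theorem KD_map (ρ : Fin n → ℕ) (f : M →ₗ[MvPolynomial (Fin n) K] N) (z : Finset (Fin n) → M)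
    (T : Finset (Fin n)) : f (KD (K := K) ρ z T) = KD (K := K) ρ (fun T => f (z T)) T := by
  unfold KD
  rw [map_sum]
  apply Finset.sum_congr rfl
  intro v _
  split_ifs
  · simp
  · rw [map_zsmul, map_smul]

theorem KD_pi (ρ : Fin n → ℕ) {m : ℕ} (z : Finset (Fin n) → Fin m → MvPolynomial (Fin n) K)
    (T : Finset (Fin n)) (j : Fin m) :
    KD (K := K) ρ z T j = KD (K := K) ρ (fun T => z T j) T :=
  KD_map (M := Fin m → MvPolynomial (Fin n) K) (N := MvPolynomial (Fin n) K)
    ρ (LinearMap.proj j) z T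

theorem KD_congr (ρ : Fin n → ℕ) {z z' : Finset (Fin n) → M} {T : Finset (Fin n)}
    (h : ∀ T', T'.card = T.card + 1 → z T' = z' T') :
    KD (K := K) ρ z T = KD (K := K) ρ z' T := by
  unfold KD
  apply Finset.sum_congr rfl
  intro v _
  split_ifs with hv
  · rfl
  · rw [h _ (Finset.card_insert_of_notMem hv)]

theorem KD_sub (ρ : Fin n → ℕ) (z z' : Finset (Fin n) → M) (T : Finset (Fin n)) :
    KD (K := K) ρ (fun T => z T - z' T) T = KD (K := K) ρ z T - KD (K := K) ρ z' T := by
  unfold KD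
  rw [← Finset.sum_sub_distrib]
  apply Finset.sum_congr rfl
  intro v _
  split_ifs with hv
  · simp
  · rw [smul_sub, smul_sub]

theorem KD_KD (ρ : Fin n → ℕ) (hρ : Function.Injective ρ) (z : Finset (Fin n) → M)
    (T : Finset (Fin n)) : KD (K := K) ρ (KD (K := K) ρ z) T = 0 := by
  have h1 : KD (K := K) ρ (KD (K := K) ρ z) T = ∑ p : Fin n × Fin n,
      if p.1 ∈ T ∨ p.2 ∈ insert p.1 T then 0 else
        (sg ρ T p.1 * sg ρ (insert p.1 T) p.2) •
          ((X p.1 : MvPolynomial (Fin n) K) * X p.2) • z (insert p.2 (insert p.1 T)) := by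
    rw [Fintype.sum_prod_type]
    unfold KD
    apply Finset.sum_congr rfl
    intro v _
    by_cases hv : v ∈ T
    · simp [hv]
    · simp only [hv, if_false, false_or]
      rw [Finset.smul_sum, Finset.smul_sum]
      apply Finset.sum_congr rfl
      intro u _
      split_ifs
      · simp
      · rw [mul_smul, mul_smul, smul_comm (X v : MvPolynomial (Fin n) K)]
  rw [h1]
  refine Finset.sum_involution (fun p _ => (p.2, p.1)) ?_ ?_ ?_ ?_
  · rintro ⟨v, u⟩ _
    by_cases hv : v ∈ T
    · simp [hv]
    by_cases hu : u ∈ T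
    · simp [hu]
    by_cases huv : u = v
    · simp [huv]
    have huv' : ¬ v = u := fun h => huv h.symm
    simp only [hv, hu, huv, huv', Finset.mem_insert, or_self, if_false]
    rw [sg_insert ρ hv, sg_insert ρ hu, Finset.insert_comm, mul_comm (X u : MvPolynomial (Fin n) K),
      ← add_smul]
    have : ρ u ≠ ρ v := fun h => huv (hρ h)
    convert zero_smul ℤ _
    rcases lt_or_gt_of_ne this with h | h
    · rw [if_neg (by omega), if_pos h]; ring
    · rw [if_pos (by omega), if_neg (by omega)]; ring
  · rintro ⟨v, u⟩ _ h heq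
    have : u = v := congrArg Prod.fst heq
    simp [this] at h
  · simp
  · simp

/-- The contraction operators -/
noncomputable def hopF (ρ : Fin n → ℕ) (t : Fin n) (p : MvPolynomial (Fin n) K) :
    MvPolynomial (Fin n) K :=
  ∑ m ∈ (p.divMonomial (Finsupp.single t 1)).support.filter
    (fun m => ∀ u ∈ m.support, ρ t ≤ ρ u), monomial m (coeff (Finsupp.single t 1 + m) p)

theorem coeff_hopF (ρ : Fin n → ℕ) (t : Fin n) (p : MvPolynomial (Fin n) K) (m : Fin n →₀ ℕ) :
    coeff m (hopF ρ t p) = if ∀ u ∈ m.support, ρ t ≤ ρ u then coeff (Finsupp.single t 1 + m) p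
      else 0 := by
  unfold hopF
  simp only [coeff_sum, coeff_monomial]
  rw [Finset.sum_ite_eq' _ m (fun m => coeff (Finsupp.single t 1 + m) p)]
  have h1 : m ∈ (p.divMonomial (Finsupp.single t 1)).support ↔
      coeff (Finsupp.single t 1 + m) p ≠ 0 := by
    rw [mem_support_iff, coeff_divMonomial]
  have h3 : m ∈ Finset.filter (fun m => ∀ u ∈ m.support, ρ t ≤ ρ u)
      (p.divMonomial (Finsupp.single t 1)).support ↔ coeff (Finsupp.single t 1 + m) p ≠ 0 ∧
        ∀ u ∈ m.support, ρ t ≤ ρ u := by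
    rw [Finset.mem_filter, h1]
  by_cases h2 : coeff (Finsupp.single t 1 + m) p = 0
  · rw [h2, ite_self, ite_self]
  by_cases h4 : ∀ u ∈ m.support, ρ t ≤ ρ u
  · rw [if_pos (h3.2 ⟨h2, h4⟩), if_pos h4]
  · rw [if_neg (fun h => h4 (h3.1 h).2), if_neg h4]

noncomputable def hop (ρ : Fin n → ℕ) (t : Fin n) :
    MvPolynomial (Fin n) K →+ MvPolynomial (Fin n) K where
  toFun := hopF ρ t
  map_zero' := by
    ext m
    rw [coeff_hopF]; simp
  map_add' := by
    intro p q
    ext m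
    rw [coeff_add, coeff_hopF, coeff_hopF, coeff_hopF, coeff_add]
    split_ifs <;> simp

theorem coeff_hop (ρ : Fin n → ℕ) (t : Fin n) (p : MvPolynomial (Fin n) K) (m : Fin n →₀ ℕ) :
    coeff m (hop ρ t p) = if ∀ u ∈ m.support, ρ t ≤ ρ u then coeff (Finsupp.single t 1 + m) p
      else 0 := coeff_hopF ρ t p m

theorem hop_lt (ρ : Fin n → ℕ) {t v : Fin n} (h : ρ v < ρ t) (p : MvPolynomial (Fin n) K) :
    hop ρ t (X v * p) = 0 := by
  ext m
  rw [coeff_hop, coeff_zero]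
  split_ifs with h1
  · rw [coeff_X_mul', if_neg]
    intro hv
    have hne : t ≠ v := by rintro rfl; omega
    have : v ∈ m.support := by
      simp only [Finsupp.mem_support_iff, Finsupp.add_apply, Finsupp.single_apply, if_neg hne] at *
      omega
    have := h1 v this
    omega
  · rfl

theorem hop_gt (ρ : Fin n → ℕ) {t v : Fin n} (h : ρ t < ρ v) (p : MvPolynomial (Fin n) K) :
    hop ρ t (X v * p) = X v * hop ρ t p := by
  have hne : t ≠ v := by rintro rfl; omega
  ext m
  rw [coeff_hop, coeff_X_mul', coeff_X_mul', coeff_hop]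
  have hv : v ∈ (Finsupp.single t 1 + m).support ↔ v ∈ m.support := by
    simp [Finsupp.single_apply, hne]
  by_cases hvm : v ∈ m.support
  · rw [if_pos (hv.2 hvm), if_pos hvm]
    have hm : m v ≠ 0 := by simpa using hvm
    have h1 : (∀ u ∈ m.support, ρ t ≤ ρ u) ↔ ∀ u ∈ (m - Finsupp.single v 1).support, ρ t ≤ ρ u := by
      constructor
      · intro h u hu
        apply h u
        simp only [Finsupp.mem_support_iff, Finsupp.tsub_apply] at *
        omega
      · intro h' u hu
        by_cases huv : u = v
        · subst huv; exact h.le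
        · apply h' u
          simp only [Finsupp.mem_support_iff, Finsupp.tsub_apply, Finsupp.single_apply] at *
          rw [if_neg (fun h => huv h.symm)]; omega
    rw [if_congr h1 rfl rfl]
    have h2 : Finsupp.single t 1 + m - Finsupp.single v 1 =
        Finsupp.single t 1 + (m - Finsupp.single v 1) := by
      ext u
      simp only [Finsupp.tsub_apply, Finsupp.add_apply, Finsupp.single_apply]
      split_ifs <;> subst_vars <;> omega
    rw [h2]
  · rw [if_neg (fun h => hvm (hv.1 h)), if_neg hvm]; simp

theorem hop_decomp (ρ : Fin n → ℕ) (hρ : Function.Injective ρ) (t : Fin n)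
    (p : MvPolynomial (Fin n) K) :
    hop ρ t (X t * p) + ∑ v, (if ρ v < ρ t then X v * hop ρ v p else 0) = p := by
  ext m
  rw [coeff_add, coeff_hop, coeff_sum]
  have h1 : ∀ v, coeff m (if ρ v < ρ t then X v * hop ρ v p else 0) =
      if ρ v < ρ t ∧ v ∈ m.support ∧ ∀ u ∈ m.support, ρ v ≤ ρ u then coeff m p else 0 := by
    intro v
    by_cases hv : ρ v < ρ t
    · rw [if_pos hv, coeff_X_mul', coeff_hop]
      by_cases hvm : v ∈ m.support
      · have hm : m v ≠ 0 := by simpa using hvm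
        have h2 : Finsupp.single v 1 + (m - Finsupp.single v 1) = m := by
          apply add_tsub_cancel_of_le
          simpa [Finsupp.single_le_iff, Nat.one_le_iff_ne_zero] using hvm
        have h3 : (∀ u ∈ (m - Finsupp.single v 1).support, ρ v ≤ ρ u) ↔
            ∀ u ∈ m.support, ρ v ≤ ρ u := by
          constructor
          · intro h u hu
            by_cases huv : u = v
            · rw [huv]
            · apply h u
              simp only [Finsupp.mem_support_iff, Finsupp.tsub_apply, Finsupp.single_apply] at *
              rw [if_neg (fun h => huv h.symm)]; omega
          · intro h u hu
            apply h u
            simp only [Finsupp.mem_support_iff, Finsupp.tsub_apply] at *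
            omega
        rw [if_pos hvm, h2, if_congr h3 rfl rfl]
        simp [hv, hvm]
      · simp [hvm]
    · simp [hv]
  rw [Finset.sum_congr rfl fun v _ => h1 v]
  have h2 : coeff (Finsupp.single t 1 + m) (X t * p) = coeff m p := coeff_X_mul _ _ _
  rw [h2]
  by_cases h : ∀ u ∈ m.support, ρ t ≤ ρ u
  · rw [if_pos h, Finset.sum_eq_zero, add_zero]
    intro v _
    rw [if_neg]
    rintro ⟨a, b, _⟩
    have := h v b
    omega
  · rw [if_neg h, zero_add]
    push Not at h
    obtain ⟨u, hu, hut⟩ := h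
    obtain ⟨w, hw, hwm⟩ := Finset.exists_min_image m.support ρ ⟨u, hu⟩
    rw [Finset.sum_eq_single w]
    · rw [if_pos ⟨(hwm u hu).trans_lt hut, hw, hwm⟩]
    · intro v _ hvw
      rw [if_neg]
      rintro ⟨_, hv, hvm⟩
      exact hvw (hρ (le_antisymm (hvm w hw) (hwm v hv)))
    · simp

theorem KD_exact (ρ : Fin n → ℕ) (hρ : Function.Injective ρ) {i : ℕ} (hi : 1 ≤ i)
    (z : Finset (Fin n) → MvPolynomial (Fin n) K)
    (hz : ∀ T, T.card + 1 = i → KD (K := K) ρ z T = 0) :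
    ∃ w : Finset (Fin n) → MvPolynomial (Fin n) K, ∀ T, T.card = i → KD (K := K) ρ w T = z T := by
  have hmin : ∀ T : Finset (Fin n), ∃ w : MvPolynomial (Fin n) K,
      ∀ t ∈ T, (∀ u ∈ T, ρ t ≤ ρ u) → w = hop ρ t (z (T.erase t)) := by
    intro T
    by_cases hT : T.Nonempty
    · obtain ⟨t, ht, htm⟩ := Finset.exists_min_image T ρ hT
      refine ⟨hop ρ t (z (T.erase t)), fun t' ht' htm' => ?_⟩
      have : t' = t := hρ (le_antisymm (htm' _ ht) (htm _ ht'))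
      rw [this]
    · exact ⟨0, fun t ht => absurd ⟨t, ht⟩ hT⟩
  choose w hw using hmin
  refine ⟨w, fun T hT => ?_⟩
  have hne : T.Nonempty := Finset.card_pos.1 (by omega)
  obtain ⟨t, ht, htm⟩ := Finset.exists_min_image T ρ hne
  have h0 := hz (T.erase t) (by rw [Finset.card_erase_of_mem ht]; omega)
  have h1 := congrArg (hop ρ t) h0
  rw [map_zero] at h1
  unfold KD at h1
  rw [map_sum] at h1
  have hins : insert t (T.erase t) = T := Finset.insert_erase ht
  have htT : t ∉ T.erase t := Finset.notMem_erase _ _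
  rw [← sub_zero (KD ρ w T), ← hop_decomp ρ hρ t (z T)]
  have key : KD (K := K) ρ w T + ∑ v, (hop ρ t) (if v ∈ T.erase t then 0 else
      sg ρ (T.erase t) v • (X v : MvPolynomial (Fin n) K) • z (insert v (T.erase t))) =
      hop ρ t (X t * z T) + ∑ v, (if ρ v < ρ t then X v * hop ρ v (z T) else 0) := by
    have hsplit : hop ρ t (X t * z T) = ∑ v, if v = t then hop ρ t (X t * z T) else 0 := by simp
    rw [hsplit, KD, ← Finset.sum_add_distrib, ← Finset.sum_add_distrib]
    apply Finset.sum_congr rfl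
    intro v _
    by_cases hvt : v = t
    · subst hvt
      rw [if_pos ht, if_neg htT, if_pos rfl, if_neg (lt_irrefl _), hins]
      have : sg ρ (T.erase v) v = 1 := by
        unfold sg
        rw [Finset.filter_false_of_mem]
        · simp
        · intro u hu
          have := htm u (Finset.mem_of_mem_erase hu)
          omega
      rw [this]; simp
    · rw [if_neg hvt]
      by_cases hvT : v ∈ T
      · have hle := htm v hvT
        rw [if_pos hvT, if_pos (Finset.mem_erase.2 ⟨hvt, hvT⟩), if_neg (by omega)]; simp
      · have hve : v ∉ T.erase t := fun h => hvT (Finset.mem_of_mem_erase h)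
        rw [if_neg hvT, if_neg hve, map_zsmul, smul_eq_mul, smul_eq_mul]
        have hne' : ρ v ≠ ρ t := fun h => hvt (hρ h)
        rcases lt_or_gt_of_ne hne' with h | h
        · rw [if_pos h, hop_lt ρ h]
          have h2 := hw (insert v T) v (Finset.mem_insert_self _ _) (by
            intro u hu
            rcases Finset.mem_insert.1 hu with rfl | hu
            · rfl
            · have := htm u hu; omega)
          rw [Finset.erase_insert hvT] at h2
          rw [h2]
          have : sg ρ T v = 1 := by
            unfold sg
            rw [Finset.filter_false_of_mem]
            · simp
            · intro u hu
              have := htm u hu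
              omega
          rw [this]; simp
        · rw [if_neg (by omega), hop_gt ρ h]
          have h2 := hw (insert v T) t (Finset.mem_insert_of_mem ht) (by
            intro u hu
            rcases Finset.mem_insert.1 hu with rfl | hu
            · exact le_of_lt h
            · exact htm u hu)
          rw [Finset.erase_insert_of_ne hvt] at h2
          rw [h2]
          have h3 : sg ρ T v = - sg ρ (T.erase t) v := by
            conv_lhs => rw [← hins, sg_insert ρ htT, if_pos h]
            ring
          rw [h3]; simp
  rw [h1, add_zero] at key
  rw [sub_zero]; exact key

theorem vanish (ρ : Fin n → ℕ) (hρ : Function.Injective ρ) {ℓ : ℕ} : ∀ {c : ℕ} {M : Type}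
    [AddCommGroup M] [Module (MvPolynomial (Fin n) K) M] {gr : ℕ → AddSubgroup M},
    HasRes n K ℓ c M gr → ∀ (i e : ℕ) (z : Finset (Fin n) → M), (∀ T, T.card = i → z T ∈ gr e) →
    (∀ T, T.card + 1 = i → KD (K := K) ρ z T = 0) → c < e →
    ∃ w : Finset (Fin n) → M, ∀ T, T.card = i → KD (K := K) ρ w T = z T := by
  induction ℓ with
  | zero =>
    intro c M _ _ gr h i e z _ _ _
    have : Subsingleton M := h
    exact ⟨0, fun T _ => Subsingleton.elim _ _⟩
  | succ ℓ ih =>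
    intro c M _ _ gr h i e z hz hDz hce
    obtain ⟨m, s, ε, h1, h2, h3, h4, h5⟩ := h
    have hlift : ∀ T, ∃ w : Fin m → MvPolynomial (Fin n) K, T.card = i → w ∈ frGr s e ∧ ε w = z T := by
      intro T
      by_cases hT : T.card = i
      · obtain ⟨w, hw⟩ := h4 e _ (hz T hT)
        exact ⟨w, fun _ => hw⟩
      · exact ⟨0, fun h => absurd h hT⟩
    choose y hy using hlift
    cases i with
    | zero =>
      obtain ⟨hy1, hy2⟩ := hy ∅ rfl
      rw [mem_frGr] at hy1
      have hpos : ∀ j, ∃ q : Fin n → MvPolynomial (Fin n) K, y ∅ j = ∑ v, X v * q v := by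
        intro j
        have hm0 : coeff 0 (y ∅ j) = 0 := by
          rcases hy1 j with h | ⟨ha, hb⟩
          · rw [h]; simp
          · by_contra hne
            have := hb hne
            have := h1 j
            simp at *
            omega
        have hmem : y ∅ j ∈ idealOfVars (Fin n) K := by
          rw [← pow_one (idealOfVars (Fin n) K), mem_pow_idealOfVars_iff']
          intro x hx
          have : x = 0 := by
            rw [← Finsupp.degree_eq_zero_iff]; omega
          rw [this, hm0]
        obtain ⟨q, hq⟩ := Ideal.mem_span_range_iff_exists_fun.1 hmem
        exact ⟨q, by rw [← hq]; exact Finset.sum_congr rfl fun v _ => mul_comm _ _⟩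
      choose q hq using hpos
      refine ⟨fun T => ε (fun j => ∑ v, if T = {v} then q j v else 0), ?_⟩
      intro T hT
      rw [Finset.card_eq_zero] at hT
      subst hT
      rw [← KD_map, ← hy2]
      congr 1
      ext1 j
      rw [hq j]
      unfold KD
      simp [sg]
    | succ i =>
      have hmem : ∀ T, T.card = i → KD (K := K) ρ y T ∈ LinearMap.ker ε := by
        intro T hT
        rw [LinearMap.mem_ker, KD_map, ← hDz T (by omega)]
        apply KD_congr
        intro T' hT'
        exact (hy T' (by omega)).2
      let z' : Finset (Fin n) → LinearMap.ker ε := fun T =>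
        if hT : T.card = i then ⟨KD (K := K) ρ y T, hmem T hT⟩ else 0
      have hz' : ∀ T, T.card = i → (z' T).1 = KD (K := K) ρ y T := by
        intro T hT
        simp [z', hT]
      obtain ⟨w', hw'⟩ := ih h5 i (e + 1) z' (by
        intro T hT
        rw [mem_kerGr]
        intro j
        rw [hz' T hT]
        have : KD (K := K) ρ y T j = KD (K := K) ρ (fun T => y T j) T :=
          KD_map ρ (LinearMap.proj j) y T
        rw [this]
        unfold KD
        refine sum_mem fun v _ => ?_
        split_ifs with hv
        · exact zero_mem _
        · refine zsmul_mem ?_ _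
          have h6 := (hy (insert v T) (by rw [Finset.card_insert_of_notMem hv, hT])).1
          rw [mem_frGr] at h6
          refine mul_mem_hp (t := e) (Or.inr ⟨by omega, ?_⟩) (h6 j)
          rw [Nat.add_sub_cancel_left]
          exact isHomogeneous_X _ _) (by
        intro T hT
        apply Subtype.ext
        have : (KD (K := K) ρ z' T).1 = KD (K := K) ρ (fun T => (z' T).1) T :=
          KD_map ρ (LinearMap.ker ε).subtype z' T
        rw [this]
        rw [show ((0 : LinearMap.ker ε) : Fin m → MvPolynomial (Fin n) K) = 0 from rfl,
          ← KD_KD (K := K) ρ hρ y T]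
        apply KD_congr
        intro T' hT'
        exact hz' T' (by omega)) (by omega)
      have hcyc : ∀ T, T.card = i → KD (K := K) ρ (fun T => y T - (w' T).1) T = 0 := by
        intro T hT
        rw [KD_sub, ← hz' T hT, ← hw' T hT, sub_eq_zero]
        exact KD_map ρ (LinearMap.ker ε).subtype w' T
      have hu : ∀ j : Fin m, ∃ u : Finset (Fin n) → MvPolynomial (Fin n) K,
          ∀ T, T.card = i + 1 → KD (K := K) ρ u T = y T j - (w' T).1 j := by
        intro j
        apply KD_exact ρ hρ (by omega) (fun T => y T j - (w' T).1 j)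
        intro T hT
        have := congrFun (hcyc T (by omega)) j
        rw [KD_pi] at this
        exact this
      choose u hu using hu
      refine ⟨fun T => ε (fun j => u j T), ?_⟩
      intro T hT
      rw [← KD_map]
      have h7 : KD (K := K) ρ (fun T => fun j => u j T) T = y T - (w' T).1 := by
        ext1 j
        rw [KD_pi]
        exact hu j T hT
      rw [h7, map_sub, (hy T hT).2, (w' T).2, sub_zero]

end Koszul
end SCMB

namespace SCMB

section Lower

variable {n : ℕ} {K : Type} [Field K]

theorem exists_rho {r : ℕ} (p : Fin r → Bool → Fin n)
    (hinj : ∀ i j s t, p i s = p j t → i = j ∧ s = t) :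
    ∃ ρ : Fin n → ℕ, Function.Injective ρ ∧ ∀ i s, ρ (p i s) = 2 * i.1 + s.toNat := by
  classical
  have hb : ∀ s : Bool, s.toNat ≤ 1 := fun s => by cases s <;> simp
  have hb2 : ∀ s t : Bool, s.toNat = t.toNat → s = t := fun s t => by cases s <;> cases t <;> simp
  set ρ : Fin n → ℕ := fun v => if h : ∃ x : Fin r × Bool, p x.1 x.2 = v then
    2 * h.choose.1.1 + h.choose.2.toNat else 2 * r + v.1 with hρ
  have h1 : ∀ i s, ρ (p i s) = 2 * i.1 + s.toNat := by
    intro i s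
    have h : ∃ x : Fin r × Bool, p x.1 x.2 = p i s := ⟨(i, s), rfl⟩
    simp only [hρ, dif_pos h]
    obtain ⟨h2, h3⟩ := hinj _ _ _ _ h.choose_spec
    rw [h2, h3]
  refine ⟨ρ, ?_, h1⟩
  intro u v huv
  by_cases hu : ∃ x : Fin r × Bool, p x.1 x.2 = u
  · obtain ⟨⟨i, s⟩, rfl⟩ := hu
    have := hb s
    by_cases hv : ∃ x : Fin r × Bool, p x.1 x.2 = v
    · obtain ⟨⟨j, t⟩, rfl⟩ := hv
      have h5 := hb t
      rw [h1, h1] at huv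
      dsimp only at huv ⊢
      have h6 : i = j := Fin.ext (by omega)
      subst h6
      rw [hb2 s t (by omega)]
    · rw [h1] at huv
      simp only [hρ, dif_neg hv] at huv
      have := i.2
      omega
  · by_cases hv : ∃ x : Fin r × Bool, p x.1 x.2 = v
    · obtain ⟨⟨j, t⟩, rfl⟩ := hv
      have h5 := hb t
      rw [h1] at huv
      simp only [hρ, dif_neg hu] at huv
      have := j.2
      omega
    · simp only [hρ, dif_neg hu, dif_neg hv] at huv
      exact Fin.ext (by omega)

theorem lower_core (G : SimpleGraph (Fin n)) {r : ℕ} (p : Fin r → Bool → Fin n)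
    (hinj : ∀ i j s t, p i s = p j t → i = j ∧ s = t)
    (hadj : ∀ i, G.Adj (p i true) (p i false))
    (hna : ∀ i j s t, G.Adj (p i s) (p j t) → i = j)
    {ℓ c : ℕ} (h : HasRes n K ℓ c (MvPolynomial (Fin n) K ⧸ graphIdeal K G)
      (grQ (graphIdeal K G))) : r ≤ c := by
  classical
  by_contra hc
  push Not at hc
  obtain ⟨ρ, hρ, hρp⟩ := exists_rho p hinj
  set I := graphIdeal K G with hI
  let T : (Fin r → Bool) → Finset (Fin n) := fun τ => Finset.univ.image fun i => p i (τ i)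
  let μ : (Fin r → Bool) → (Fin n →₀ ℕ) := fun τ => ∑ i, Finsupp.single (p i (!τ i)) 1
  let B := T fun _ => true
  let zt : Finset (Fin n) → MvPolynomial (Fin n) K := fun S =>
    if S = B then ∏ i, X (p i false) else 0
  have hTc : ∀ τ, (T τ).card = r := by
    intro τ
    rw [Finset.card_image_of_injective]
    · simp
    · intro i j hij; exact (hinj _ _ _ _ hij).1
  have hmemT : ∀ τ i s, p i s ∈ T τ ↔ s = τ i := by
    intro τ i s
    simp only [T, Finset.mem_image, Finset.mem_univ, true_and]
    constructor
    · rintro ⟨j, hj⟩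
      obtain ⟨h1, h2⟩ := hinj _ _ _ _ hj
      subst h1; exact h2.symm
    · rintro rfl; exact ⟨i, rfl⟩
  have hμs : ∀ τ v, v ∈ (μ τ).support ↔ ∃ i, v = p i (!τ i) := by
    intro τ v
    simp only [μ, Finsupp.mem_support_iff, Finsupp.finsetSum_apply]
    rw [Ne, Finset.sum_eq_zero_iff]
    push Not
    simp [Finsupp.single_apply, eq_comm]
  have hedge : ∀ u v, G.Adj u v → (X u * X v : MvPolynomial (Fin n) K) ∈ I := fun u v huv =>
    Ideal.subset_span ⟨u, v, huv, rfl⟩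
  have hw : ∃ w : Finset (Fin n) → MvPolynomial (Fin n) K ⧸ I,
      ∀ S, S.card = r → KD (K := K) ρ w S = Ideal.Quotient.mk I (zt S) := by
    apply vanish ρ hρ h r r (fun S => Ideal.Quotient.mk I (zt S)) _ _ hc
    · intro S _
      refine mem_grQ.2 ⟨zt S, ?_, rfl⟩
      simp only [zt]
      split_ifs
      · refine Or.inr ⟨Nat.zero_le _, ?_⟩
        have := IsHomogeneous.prod (Finset.univ : Finset (Fin r))
          (fun i => (X (p i false) : MvPolynomial (Fin n) K)) (fun _ => 1)
          (fun i _ => isHomogeneous_X K _)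
        simpa using this
      · exact Or.inl rfl
    · intro S _
      unfold KD
      apply Finset.sum_eq_zero
      intro v _
      split_ifs with hv
      · rfl
      simp only [zt]
      split_ifs with hS
      · have hvB : v ∈ B := hS ▸ Finset.mem_insert_self v S
        simp only [B, T, Finset.mem_image, Finset.mem_univ, true_and] at hvB
        obtain ⟨i, rfl⟩ := hvB
        have : (X (p i true) : MvPolynomial (Fin n) K) • Ideal.Quotient.mk I (∏ i, X (p i false))
            = 0 := by
          refine Eq.trans (b := Ideal.Quotient.mk I (X (p i true) * ∏ i, X (p i false))) rfl ?_
          rw [Ideal.Quotient.eq_zero_iff_mem, ← Finset.mul_prod_erase _ _ (Finset.mem_univ i),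
            ← mul_assoc]
          exact Ideal.mul_mem_right _ _ (hedge _ _ (hadj i))
        rw [this, smul_zero]
      · simp
  obtain ⟨w, hw⟩ := hw
  choose wt hwt using fun S => Ideal.Quotient.mk_surjective (w S)
  have hE : ∀ S, S.card = r → KD (K := K) ρ wt S - zt S ∈ I := by
    intro S hS
    rw [← Ideal.Quotient.eq_zero_iff_mem, map_sub, ← hw S hS, sub_eq_zero]
    have := KD_map (K := K) ρ (Submodule.mkQ I) wt S
    refine Eq.trans this ?_
    congr 1
    ext1 S
    exact hwt S
  have hE2 : ∀ τ, coeff (μ τ) (KD (K := K) ρ wt (T τ)) = coeff (μ τ) (zt (T τ)) := by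
    intro τ
    rw [← sub_eq_zero, ← coeff_sub]
    by_contra hne
    have h1 := hE (T τ) (hTc τ)
    rw [hI, graphIdeal_eq, mem_sqI] at h1
    rcases h1 _ hne with ⟨w, hw, _⟩ | ⟨u, _, v, _, huv, hu, hv⟩
    · simp at hw
    · rw [hμs] at hu hv
      obtain ⟨i, rfl⟩ := hu
      obtain ⟨j, rfl⟩ := hv
      have := hna _ _ _ _ huv
      subst this
      exact G.loopless.irrefl _ huv
  have hsum1 : ∑ τ, coeff (μ τ) (zt (T τ)) = 1 := by
    rw [Finset.sum_eq_single (fun _ => true)]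
    · simp only [zt, B, if_true, μ, Bool.not_true]
      have : (∏ i, X (p i false) : MvPolynomial (Fin n) K) =
          monomial (∑ i, Finsupp.single (p i false) 1) 1 := by
        rw [monomial_sum_one]
        rfl
      rw [this, coeff_monomial, if_pos rfl]
    · intro τ _ hτ
      simp only [zt]
      rw [if_neg, coeff_zero]
      intro hB
      apply hτ
      funext i
      have : p i (τ i) ∈ B := hB ▸ (hmemT τ i _).2 rfl
      exact (hmemT _ i _).1 this
    · simp
  have hsum2 : ∑ τ, coeff (μ τ) (KD (K := K) ρ wt (T τ)) = ∑ x : (Fin r → Bool) × Fin r,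
      sg ρ (T x.1) (p x.2 (!x.1 x.2)) • coeff (μ x.1 - Finsupp.single (p x.2 (!x.1 x.2)) 1)
        (wt (insert (p x.2 (!x.1 x.2)) (T x.1))) := by
    rw [Fintype.sum_prod_type]
    apply Finset.sum_congr rfl
    intro τ _
    unfold KD
    rw [coeff_sum]
    rw [← Finset.sum_image (s := Finset.univ) (g := fun i => p i (!τ i)) (f := fun v =>
      sg ρ (T τ) v • coeff (μ τ - Finsupp.single v 1) (wt (insert v (T τ))))]
    · symm
      have hcf : ∀ v, coeff (μ τ) (sg ρ (T τ) v • (X v : MvPolynomial (Fin n) K) •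
          wt (insert v (T τ))) = sg ρ (T τ) v • if v ∈ (μ τ).support then
            coeff (μ τ - Finsupp.single v 1) (wt (insert v (T τ))) else 0 := by
        intro v
        rw [smul_eq_mul, ← coeff_X_mul']
        exact map_zsmul (coeffAddMonoidHom (μ τ)) _ _
      apply Finset.sum_subset_zero_on_sdiff (Finset.subset_univ _)
      · intro v hv
        simp only [Finset.mem_sdiff, Finset.mem_univ, true_and, Finset.mem_image, not_exists] at hv
        split_ifs with h1
        · exact coeff_zero _
        · rw [hcf, if_neg, smul_zero]
          rw [hμs]
          rintro ⟨i, hi⟩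
          exact hv i hi.symm
      · intro v hv
        simp only [Finset.mem_univ, true_and, Finset.mem_image] at hv
        obtain ⟨i, rfl⟩ := hv
        rw [if_neg, hcf, if_pos]
        · rw [hμs]; exact ⟨i, rfl⟩
        · rw [hmemT]; simp
    · intro i _ j _ hij
      exact (hinj _ _ _ _ hij).1
  have hsum3 : ∑ x : (Fin r → Bool) × Fin r,
      sg ρ (T x.1) (p x.2 (!x.1 x.2)) • coeff (μ x.1 - Finsupp.single (p x.2 (!x.1 x.2)) 1)
        (wt (insert (p x.2 (!x.1 x.2)) (T x.1))) = 0 := by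
    refine Finset.sum_involution (fun x _ => (Function.update x.1 x.2 (!x.1 x.2), x.2)) ?_ ?_ ?_ ?_
    · rintro ⟨τ, i⟩ _
      set τ' := Function.update τ i (!τ i) with hτ'
      have e1 : τ' i = !τ i := by simp [hτ']
      have e2 : ∀ j, j ≠ i → τ' j = τ j := fun j hj => by simp [hτ', hj]
      set P := (Finset.univ.erase i).image fun j => p j (τ j) with hP
      have hPn : ∀ s, p i s ∉ P := by
        intro s hs
        simp only [hP, Finset.mem_image, Finset.mem_erase] at hs
        obtain ⟨j, hj, hjs⟩ := hs
        exact hj.1 (hinj _ _ _ _ hjs).1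
      have hT : ∀ τ : Fin r → Bool, T τ = insert (p i (τ i))
          ((Finset.univ.erase i).image fun j => p j (τ j)) := by
        intro τ
        have := Finset.image_insert (fun j => p j (τ j)) i (Finset.univ.erase i)
        rw [Finset.insert_erase (Finset.mem_univ i)] at this
        exact this
      have t1 : T τ = insert (p i (τ i)) P := hT τ
      have t2 : T τ' = insert (p i (!τ i)) P := by
        have : P = (Finset.univ.erase i).image fun j => p j (τ' j) := by
          rw [hP]
          apply Finset.image_congr
          intro j hj
          simp only [Finset.coe_erase, Set.mem_sdiff, Set.mem_singleton_iff] at hj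
          simp only
          rw [e2 j hj.2]
        rw [this, ← e1]
        exact hT τ'
      have m1 : μ τ - Finsupp.single (p i (!τ i)) 1 =
          ∑ j ∈ Finset.univ.erase i, Finsupp.single (p j (!τ j)) 1 := by
        simp only [μ]
        rw [← Finset.add_sum_erase _ _ (Finset.mem_univ i), add_tsub_cancel_left]
      have m2 : μ τ' - Finsupp.single (p i (τ i)) 1 =
          ∑ j ∈ Finset.univ.erase i, Finsupp.single (p j (!τ j)) 1 := by
        simp only [μ]
        rw [← Finset.add_sum_erase _ _ (Finset.mem_univ i), e1, Bool.not_not,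
          add_tsub_cancel_left]
        apply Finset.sum_congr rfl
        intro j hj
        rw [e2 j (Finset.ne_of_mem_erase hj)]
      simp only [e1, Bool.not_not]
      rw [m1, m2, t1, t2, Finset.insert_comm, sg_insert ρ (hPn _), sg_insert ρ (hPn _), ← add_smul]
      have hs : sg ρ P (p i (τ i)) = sg ρ P (p i (!τ i)) := by
        unfold sg
        congr 2
        apply Finset.filter_congr
        intro v hv
        simp only [hP, Finset.mem_image, Finset.mem_erase] at hv
        obtain ⟨j, hj, rfl⟩ := hv
        have : j.1 ≠ i.1 := fun h => hj.1 (Fin.ext h)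
        have hb : ∀ s : Bool, s.toNat ≤ 1 := fun s => by cases s <;> simp
        have b1 := hb (τ j)
        have b2 := hb (τ i)
        have b3 := hb (!τ i)
        rw [hρp, hρp, hρp]
        omega
      convert zero_smul ℤ _
      rw [hs, hρp, hρp]
      cases τ i
      · simp
      · simp
    · rintro ⟨τ, i⟩ _ _ heq
      have := congrFun (congrArg Prod.fst heq) i
      simp at this
    · simp
    · simp
  have : (1 : K) = 0 := by
    rw [← hsum1, ← hsum3, ← hsum2]
    exact (Finset.sum_congr rfl fun τ _ => hE2 τ).symm
  exact one_ne_zero this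

theorem lower (G : SimpleGraph (Fin n)) {r : ℕ} {f : Fin r → Fin n × Fin n}
    (hf : G.IsInducedMatching f) {c : ℕ} (F : GFR n K (graphIdeal K G))
    (hF : ∀ (i : ℕ) (j : Fin (F.rk i)), F.tw i j ≤ c + i) : r ≤ c := by
  have hI : IsHomI (graphIdeal K G) := by
    rw [graphIdeal_eq]; exact sqI_hom (K := K) _ _
  obtain ⟨ℓ, hℓ⟩ := GFR.hasRes hI F hF
  obtain ⟨h1, h2, h3⟩ := hf
  have hd : ∀ (i j) (s t : Bool), (if s then (f i).2 else (f i).1) = (if t then (f j).2 else (f j).1) →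
      i = j := by
    intro i j s t hst
    by_contra hij
    have a1 : (if s = true then (f i).2 else (f i).1) ∈ ({(f i).1, (f i).2} : Finset (Fin n)) := by
      split_ifs <;> simp
    have a2 : (if t = true then (f j).2 else (f j).1) ∈ ({(f j).1, (f j).2} : Finset (Fin n)) := by
      split_ifs <;> simp
    rw [hst] at a1
    exact Finset.disjoint_left.1 (h2 i j hij) a1 a2
  refine lower_core G (fun i s => if s then (f i).2 else (f i).1) ?_ ?_ ?_ hℓ
  · intro i j s t hst
    have := hd i j s t hst
    subst this
    refine ⟨rfl, ?_⟩
    have hne : (f i).1 ≠ (f i).2 := (h1 i).ne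
    cases s <;> cases t
    · rfl
    · exact absurd hst hne
    · exact absurd hst.symm hne
    · rfl
  · intro i
    exact (h1 i).symm
  · intro i j s t hadj
    obtain ⟨k, hk⟩ := h3 _ _ hadj ((im_mem _ _).2 ⟨i, by split_ifs <;> simp⟩)
      ((im_mem _ _).2 ⟨j, by split_ifs <;> simp⟩)
    have a1 : (if s = true then (f i).2 else (f i).1) ∈ ({(f k).1, (f k).2} : Finset (Fin n)) := by
      rw [← hk]; simp
    have a2 : (if t = true then (f j).2 else (f j).1) ∈ ({(f k).1, (f k).2} : Finset (Fin n)) := by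
      rw [← hk]; simp
    simp only [Finset.mem_insert, Finset.mem_singleton] at a1 a2
    have b1 : i = k := by
      rcases a1 with a1 | a1
      · exact hd i k s false (by simpa using a1)
      · exact hd i k s true (by simpa using a1)
    have b2 : j = k := by
      rcases a2 with a1 | a1
      · exact hd j k t false (by simpa using a1)
      · exact hd j k t true (by simpa using a1)
    rw [b1, b2]

end Lower
end SCMB

namespace SCMB

section PF

variable {n : ℕ} {K : Type} [Field K]

/-- the projection killing the variables outside `F` -/
noncomputable def prF (K : Type) [Field K] (F : Finset (Fin n)) :
    MvPolynomial (Fin n) K →ₐ[K] MvPolynomial (Fin n) K :=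
  aeval fun v => if v ∈ F then X v else 0

theorem prF_monomial (F : Finset (Fin n)) (m : Fin n →₀ ℕ) (c : K) :
    prF K F (monomial m c) = if m.support ⊆ F then monomial m c else 0 := by
  unfold prF
  rw [aeval_monomial]
  split_ifs with h
  · rw [monomial_eq, algebraMap_eq]
    congr 1
    apply Finsupp.prod_congr
    intro v hv
    rw [if_pos (h hv)]
  · obtain ⟨v, hv, hvF⟩ := Finset.not_subset.1 h
    rw [Finsupp.prod, Finset.prod_eq_zero hv, mul_zero]
    rw [if_neg hvF, zero_pow (Finsupp.mem_support_iff.1 hv)]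

theorem coeff_prF (F : Finset (Fin n)) (p : MvPolynomial (Fin n) K) (m : Fin n →₀ ℕ) :
    coeff m (prF K F p) = if m.support ⊆ F then coeff m p else 0 := by
  induction p using MvPolynomial.induction_on' with
  | monomial m' c =>
    rw [prF_monomial]
    by_cases h : m' = m
    · subst h
      split_ifs <;> simp
    · split_ifs <;> simp [coeff_monomial, h]
  | add p q hp hq =>
    rw [map_add, coeff_add, hp, hq, coeff_add]
    split_ifs <;> simp

/-- The prime generated by the variables outside `F` -/
noncomputable def PF (K : Type) [Field K] (F : Finset (Fin n)) : Ideal (MvPolynomial (Fin n) K) :=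
  RingHom.ker (prF K F)

instance (F : Finset (Fin n)) : (PF K F).IsPrime := RingHom.ker_isPrime _

theorem mem_PF_iff {F : Finset (Fin n)} {p : MvPolynomial (Fin n) K} :
    p ∈ PF K F ↔ prF K F p = 0 := Iff.rfl

theorem mem_PF {F : Finset (Fin n)} {p : MvPolynomial (Fin n) K} :
    p ∈ PF K F ↔ ∀ m, coeff m p ≠ 0 → ¬ m.support ⊆ F := by
  rw [mem_PF_iff]
  constructor
  · intro h m hm hF
    apply hm
    have := coeff_prF F p m
    rw [h, if_pos hF] at this
    exact this.symm
  · intro h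
    ext m
    rw [coeff_prF]
    split_ifs with hF
    · by_contra hne
      exact h m hne hF
    · rfl

theorem PF_anti {F F' : Finset (Fin n)} (h : F ⊆ F') : PF K F' ≤ PF K F := by
  intro p hp
  rw [mem_PF] at hp ⊢
  exact fun m hm hF => hp m hm (hF.trans h)

theorem X_mem_PF {F : Finset (Fin n)} {v : Fin n} :
    (X v : MvPolynomial (Fin n) K) ∈ PF K F ↔ v ∉ F := by
  rw [mem_PF_iff, prF, aeval_X]
  split_ifs with h
  · simp [h, X_ne_zero]
  · simp [h]

theorem prF_idem (F : Finset (Fin n)) (p : MvPolynomial (Fin n) K) :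
    prF K F (prF K F p) = prF K F p := by
  ext m
  rw [coeff_prF, coeff_prF]
  split_ifs <;> rfl

theorem sub_prF_mem (F : Finset (Fin n)) (p : MvPolynomial (Fin n) K) :
    p - prF K F p ∈ PF K F := by
  rw [mem_PF_iff, map_sub, prF_idem, sub_self]

theorem maxIdeal_le : maxIdeal n K ≤ PF K ∅ := by
  unfold maxIdeal
  rw [Ideal.span_le]
  rintro _ ⟨v, rfl⟩
  exact X_mem_PF.2 (by simp)

theorem PF_erase {F : Finset (Fin n)} {v : Fin n} {p : MvPolynomial (Fin n) K}
    (hp : p ∈ PF K (F.erase v)) : ∃ a, p - X v * a ∈ PF K F := by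
  have : (X v : MvPolynomial (Fin n) K) ∣ prF K F p := by
    rw [X_dvd_iff_modMonomial_eq_zero]
    ext m
    rw [coeff_zero]
    by_cases h : Finsupp.single v 1 ≤ m
    · exact coeff_modMonomial_of_le _ h
    · rw [coeff_modMonomial_of_not_le _ h, coeff_prF]
      split_ifs with hF
      · by_contra hne
        refine mem_PF.1 hp m hne ?_
        rw [Finset.subset_erase]
        refine ⟨hF, fun hv => h ?_⟩
        rw [Finsupp.single_le_iff]
        exact Nat.one_le_iff_ne_zero.2 (Finsupp.mem_support_iff.1 hv)
      · rfl
  obtain ⟨a, ha⟩ := this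
  exact ⟨a, ha ▸ sub_prF_mem F p⟩

theorem killCompl_eq_zero {F : Finset (Fin n)} {p : MvPolynomial (Fin n) K} (hp : p ∈ PF K F) :
    killCompl (Subtype.val_injective : Function.Injective (Subtype.val : F → Fin n)) p = 0 := by
  apply rename_injective (R := K) (Subtype.val : F → Fin n) Subtype.val_injective
  have h : (rename (R := K) (Subtype.val : F → Fin n)).comp
      (killCompl (Subtype.val_injective : Function.Injective (Subtype.val : F → Fin n))) =
      prF K F := by
    apply algHom_ext
    intro v
    rw [AlgHom.comp_apply, killCompl, prF, aeval_X, aeval_X]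
    by_cases hv : v ∈ F
    · have hr : v ∈ Set.range (Subtype.val : F → Fin n) := ⟨⟨v, hv⟩, rfl⟩
      rw [dif_pos hr, if_pos hv, rename_X]
      congr 1
      exact congrArg Subtype.val ((Equiv.ofInjective _ _).symm_apply_apply (⟨v, hv⟩ : F))
    · rw [dif_neg, if_neg hv, map_zero]
      rintro ⟨x, rfl⟩
      exact hv x.2
  rw [map_zero]
  exact (DFunLike.congr_fun h p).trans hp

theorem dim_ge {F : Finset (Fin n)} {J : Ideal (MvPolynomial (Fin n) K)} (hJ : J ≤ PF K F) :
    (((F.card : ℕ) : WithTop ℕ) : WithBot (WithTop ℕ)) ≤ ringKrullDim (MvPolynomial (Fin n) K ⧸ J) := by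
  let f : (MvPolynomial (Fin n) K ⧸ J) →+* MvPolynomial F K := Ideal.Quotient.lift J
    (killCompl (Subtype.val_injective : Function.Injective (Subtype.val : F → Fin n))).toRingHom
    (fun a ha => killCompl_eq_zero (hJ ha))
  have hf : Function.Surjective f := by
    intro q
    refine ⟨Ideal.Quotient.mk J (rename Subtype.val q), ?_⟩
    exact killCompl_rename_app _ _
  have := ringKrullDim_le_of_surjective f hf
  rw [MvPolynomial.ringKrullDim_of_isNoetherianRing, ringKrullDim_eq_zero_of_field] at this
  refine le_trans (le_of_eq ?_) this
  rw [zero_add, Nat.card_eq_fintype_card, Fintype.card_coe]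
  rfl

end PF

section GR
variable {n : ℕ} {K : Type} [Field K] (G : SimpleGraph (Fin n))

theorem mem_graphIdeal {p : MvPolynomial (Fin n) K} :
    p ∈ graphIdeal K G ↔ ∀ m, coeff m p ≠ 0 → ¬ Indep G m.support := by
  rw [graphIdeal_eq, mem_sqI]
  refine forall_congr' fun m => imp_congr_right fun _ => ?_
  unfold Indep JS
  simp only [Set.mem_ofPred_eq]
  push Not
  constructor
  · rintro (⟨w, hw, _⟩ | ⟨u, _, v, _, h, hu, hv⟩)
    · simp at hw
    · exact ⟨u, hu, v, hv, h⟩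
  · rintro ⟨u, hu, v, hv, h⟩
    exact Or.inr ⟨u, Finset.mem_univ _, v, Finset.mem_univ _, h, hu, hv⟩

theorem graphIdeal_le {F : Finset (Fin n)} (hF : Indep G F) : graphIdeal K G ≤ PF K F := by
  intro p hp
  rw [mem_graphIdeal] at hp
  rw [mem_PF]
  intro m hm hmF
  exact hp m hm fun u hu v hv => hF u (hmF hu) v (hmF hv)

theorem mem_graphIdeal_of {p : MvPolynomial (Fin n) K} (h : ∀ F, Indep G F → p ∈ PF K F) :
    p ∈ graphIdeal K G := by
  rw [mem_graphIdeal]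
  intro m hm hI
  exact mem_PF.1 (h _ hI) m hm (Finset.Subset.refl _)

end GR
end SCMB

namespace SCMB

section ExtG
open CategoryTheory Abelian

variable {R : Type} [CommRing R]

/-- `Ext^i(A,B)` is killed by an element of `1 + m`. -/
def LZ (m : Ideal R) (A B : Type) [AddCommGroup A] [Module R A] [AddCommGroup B] [Module R B]
    (i : ℕ) : Prop :=
  ∃ s : R, s - 1 ∈ m ∧ ∀ x : Ext (ModuleCat.of R A) (ModuleCat.of R B) i, s • x = 0

variable {m : Ideal R} {A A' B B₁ B₂ B₃ : Type} [AddCommGroup A] [Module R A]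
  [AddCommGroup A'] [Module R A'] [AddCommGroup B] [Module R B]
  [AddCommGroup B₁] [Module R B₁] [AddCommGroup B₂] [Module R B₂] [AddCommGroup B₃] [Module R B₃]

theorem one_add_mul {m : Ideal R} {s t : R} (hs : s - 1 ∈ m) (ht : t - 1 ∈ m) : s * t - 1 ∈ m := by
  have : s * t - 1 = s * (t - 1) + (s - 1) := by ring
  rw [this]
  exact m.add_mem (m.mul_mem_left _ ht) hs

theorem sexact (f : B₁ →ₗ[R] B₂) (g : B₂ →ₗ[R] B₃) (hf : Function.Injective f)
    (hg : Function.Surjective g) (h : Function.Exact f g) :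
    (ModuleCat.shortComplexOfCompEqZero f g h.linearMap_comp_eq_zero).ShortExact := by
  exact ModuleCat.shortComplex_shortExact _ h hf hg

theorem LZ.cov {f : B₁ →ₗ[R] B₂} {g : B₂ →ₗ[R] B₃} (hf : Function.Injective f)
    (hg : Function.Surjective g) (h : Function.Exact f g) {i : ℕ}
    (h1 : LZ m A B₁ i) (h3 : LZ m A B₃ i) : LZ m A B₂ i := by
  obtain ⟨s, hs, hs'⟩ := h1
  obtain ⟨t, ht, ht'⟩ := h3
  refine ⟨s * t, one_add_mul hs ht, fun x => ?_⟩
  have hS := sexact f g hf hg h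
  obtain ⟨y, hy⟩ := Ext.covariant_sequence_exact₂ (ModuleCat.of R A) hS (t • x) (by
    rw [Ext.smul_comp]
    exact ht' _)
  rw [mul_smul, ← hy, ← Ext.smul_comp]
  have := hs' y
  rw [this, Ext.zero_comp]

theorem LZ.of_kill (i : ℕ) (h : ∃ s : R, s - 1 ∈ m ∧ ∀ b : B, s • b = 0) : LZ m A B i := by
  obtain ⟨s, hs, hb⟩ := h
  refine ⟨s, hs, fun x => ?_⟩
  rw [Ext.smul_eq_comp_mk₀]
  have : s • 𝟙 (ModuleCat.of R B) = 0 := by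
    ext b
    exact hb b
  rw [this, Ext.mk₀_zero, Ext.comp_zero]

theorem LZ.contra [IsNoetherianRing R] [Module.Finite R A] [Module.Finite R B] {x : R} (hx : x ∈ m)
    (hreg : Function.Injective (LinearMap.lsmul R A x)) {g : A →ₗ[R] A'}
    (hg : Function.Surjective g) (h : Function.Exact (LinearMap.lsmul R A x) g) {i : ℕ}
    (h1 : LZ m A' B (i + 1)) : LZ m A B i := by
  have hS := sexact _ g hreg hg h
  obtain ⟨s, hs, hs'⟩ := h1
  have : ∀ y : Ext (ModuleCat.of R A) (ModuleCat.of R B) i, y ∈ m • (⊤ : Submodule R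
      (Ext (ModuleCat.of R A) (ModuleCat.of R B) i)) := by
    intro y
    obtain ⟨z, hz⟩ := Ext.contravariant_sequence_exact₁ hS (ModuleCat.of R B) (s • y)
      (Nat.add_comm 1 i) (by rw [Ext.comp_smul]; exact hs' _)
    have h2 : s • y = x • z := by
      rw [← hz]
      have : (ModuleCat.shortComplexOfCompEqZero (LinearMap.lsmul R A x) g h.linearMap_comp_eq_zero).f =
        x • 𝟙 (ModuleCat.of R A) := by
        rfl
      rw [this, Ext.mk₀_smul, Ext.smul_comp]
      congr 1
      exact Ext.mk₀_id_comp z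
    have h3 : y = x • z - (s - 1) • y := by
      rw [← h2, sub_smul, one_smul]; abel
    rw [h3]
    exact sub_mem (Submodule.smul_mem_smul hx trivial) (Submodule.smul_mem_smul hs trivial)
  obtain ⟨t, ht, ht'⟩ := Submodule.exists_sub_one_mem_and_smul_eq_zero_of_fg_of_le_smul m
    (⊤ : Submodule R (Ext (ModuleCat.of R A) (ModuleCat.of R B) i)) (Module.Finite.fg_top)
    (fun y _ => this y)
  exact ⟨t, ht, fun y => ht' y trivial⟩

theorem LZ.of_regular [IsNoetherianRing R] [Module.Finite R B] (rs : List R) (mem : ∀ r ∈ rs, r ∈ m)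
    (reg : RingTheory.Sequence.IsRegular B rs) {i : ℕ} (hi : i < rs.length) : LZ m (R ⧸ m) B i := by
  by_cases h : m • (⊤ : Submodule R B) = ⊤
  · apply LZ.of_kill
    obtain ⟨t, ht, ht'⟩ := Submodule.exists_sub_one_mem_and_smul_eq_zero_of_fg_of_le_smul m
      (⊤ : Submodule R B) (Module.Finite.fg_top) (le_of_eq h.symm)
    exact ⟨t, ht, fun y => ht' y trivial⟩
  · have := ModuleCat.subsingleton_ext_of_exists_isRegular m (ModuleCat.of R (R ⧸ m))
      (by
        rw [Module.support_eq_zeroLocus]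
        change PrimeSpectrum.zeroLocus (Module.annihilator R (R ⧸ m) : Set R) ⊆ _
        rw [Ideal.annihilator_quotient])
      (ModuleCat.of R B) (lt_top_iff_ne_top.2 h) rs mem reg i hi
    exact ⟨1, by simp, fun x => Subsingleton.elim _ _⟩

theorem LZ.hom (h : LZ m A B 0) : ∃ s : R, s - 1 ∈ m ∧ ∀ f : A →ₗ[R] B, s • f = 0 := by
  obtain ⟨s, hs, hs'⟩ := h
  refine ⟨s, hs, fun f => ?_⟩
  have := hs' (Ext.mk₀ (ModuleCat.ofHom f))
  rw [← Ext.mk₀_smul, Ext.mk₀_eq_zero_iff] at this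
  have h2 := congrArg ModuleCat.Hom.hom this
  exact h2

theorem LZ.ext {Q : Ideal R} (h : LZ m (R ⧸ Q) B 1) : ∃ s : R, s - 1 ∈ m ∧ ∀ f : Q →ₗ[R] B,
    ∃ c : B, ∀ q : Q, s • f q = (q : R) • c := by
  obtain ⟨s, hs, hs'⟩ := h
  refine ⟨s, hs, fun f => ?_⟩
  have hS := sexact (Submodule.subtype Q) (Submodule.mkQ Q) Subtype.val_injective
    (Submodule.mkQ_surjective Q) (LinearMap.exact_subtype_mkQ Q)
  obtain ⟨z, hz⟩ := Ext.contravariant_sequence_exact₁ hS (ModuleCat.of R B)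
      (s • Ext.mk₀ (ModuleCat.ofHom f)) (Nat.add_comm 1 0) (by rw [Ext.comp_smul]; exact hs' _)
  obtain ⟨z, rfl⟩ := (Ext.mk₀_bijective _ _).2 z
  rw [Ext.mk₀_comp_mk₀, ← Ext.mk₀_smul] at hz
  have h2 := congrArg ModuleCat.Hom.hom ((Ext.mk₀_bijective _ _).1 hz)
  refine ⟨z.hom (1 : R), fun q => ?_⟩
  have h3 := LinearMap.congr_fun h2 q
  refine Eq.trans h3.symm ?_
  change z.hom (q : R) = _
  rw [← map_smul, smul_eq_mul, mul_one]

end ExtG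
end SCMB

namespace SCMB

section SCM

variable {n : ℕ} {K : Type} [Field K]

theorem LZ.quot {R M A : Type} [CommRing R] [AddCommGroup M] [Module R M] [AddCommGroup A]
    [Module R A] {m : Ideal R}
    {S T : Submodule R M} (h : S ≤ T) {i : ℕ} (h1 : LZ m A (subQuot S T) i)
    (h2 : LZ m A (M ⧸ T) i) : LZ m A (M ⧸ S) i := by
  refine LZ.cov (f := Submodule.mapQ (Submodule.comap T.subtype S) S T.subtype le_rfl)
    (g := Submodule.factor h) ?_ ?_ ?_ h1 h2
  · rw [← LinearMap.ker_eq_bot, Submodule.ker_mapQ]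
    rw [Submodule.eq_bot_iff]
    rintro _ ⟨x, hx, rfl⟩
    rw [Submodule.mkQ_apply, Submodule.Quotient.mk_eq_zero]
    exact hx
  · intro x
    obtain ⟨y, rfl⟩ := Submodule.mkQ_surjective T x
    exact ⟨Submodule.mkQ S y, rfl⟩
  · intro x
    obtain ⟨y, rfl⟩ := Submodule.mkQ_surjective S x
    constructor
    · intro hy
      have : y ∈ T := (Submodule.Quotient.mk_eq_zero T).1 hy
      exact ⟨Submodule.Quotient.mk ⟨y, this⟩, rfl⟩
    · rintro ⟨z, hz⟩
      obtain ⟨z, rfl⟩ := Submodule.mkQ_surjective _ z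
      rw [← hz]
      exact (Submodule.Quotient.mk_eq_zero T).2 z.2

theorem cm_LZ {C : Type} [AddCommGroup C] [Module (MvPolynomial (Fin n) K) C]
    [Module.Finite (MvPolynomial (Fin n) K) C] (hC : IsCMmod n K C) {d : ℕ}
    (hd : (((d : ℕ) : WithTop ℕ) : WithBot (WithTop ℕ)) ≤ dimR n K C) (ρ : Finset (Fin n)) :
    ∀ i, i + ρ.card < d → LZ (PF K (∅ : Finset (Fin n))) (MvPolynomial (Fin n) K ⧸ PF K ρ) C i := by
  induction ρ using Finset.induction_on with
  | empty =>
    intro i hi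
    simp only [Finset.card_empty, add_zero] at hi
    rcases hC with hC | hC
    · exact LZ.of_kill i ⟨1, by simp, fun b => Subsingleton.elim _ _⟩
    · rw [← hC] at hd
      have hd' : d ≤ depthR n K C := by exact_mod_cast hd
      have hmem : depthR n K C ∈ { k : ℕ | ∃ rs : List (MvPolynomial (Fin n) K), rs.length = k ∧
          (∀ r ∈ rs, r ∈ maxIdeal n K) ∧ RingTheory.Sequence.IsRegular C rs } := by
        apply Nat.sSup_mem
        · by_contra hne
          rw [Set.not_nonempty_iff_eq_empty] at hne
          have : depthR n K C = 0 := by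
            unfold depthR
            rw [hne]; simp
          omega
        · by_contra hne
          have : depthR n K C = 0 := Nat.sSup_of_not_bddAbove hne
          omega
      obtain ⟨rs, hl, hm, hr⟩ := hmem
      exact LZ.of_regular rs (fun r hr => maxIdeal_le (hm r hr)) hr (by omega)
  | insert v ρ hv ih =>
    intro i hi
    rw [Finset.card_insert_of_notMem hv] at hi
    refine LZ.contra (x := (X v : MvPolynomial (Fin n) K)) (X_mem_PF.2 (by simp)) ?_
      (g := Submodule.factor (PF_anti (K := K) (Finset.subset_insert v ρ))) ?_ ?_
      (ih (i + 1) (by omega))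
    · rw [← LinearMap.ker_eq_bot, LinearMap.ker_eq_bot']
      intro a ha
      obtain ⟨p, rfl⟩ := Ideal.Quotient.mk_surjective a
      have h1 : X v * p ∈ PF K (insert v ρ) := Ideal.Quotient.eq_zero_iff_mem.1 ha
      rcases Ideal.IsPrime.mem_or_mem inferInstance h1 with h | h
      · exact absurd (X_mem_PF.1 h) (by simp)
      · exact Ideal.Quotient.eq_zero_iff_mem.2 h
    · intro x
      obtain ⟨y, rfl⟩ := Submodule.mkQ_surjective _ x
      exact ⟨Submodule.mkQ _ y, rfl⟩
    · intro x
      obtain ⟨p, rfl⟩ := Ideal.Quotient.mk_surjective x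
      constructor
      · intro hp
        have : p ∈ PF K ρ := Ideal.Quotient.eq_zero_iff_mem.1 hp
        rw [← Finset.erase_insert hv] at this
        obtain ⟨a, ha⟩ := PF_erase this
        exact ⟨Ideal.Quotient.mk _ a, ((Ideal.Quotient.eq).2 ha).symm⟩
      · rintro ⟨a, ha⟩
        obtain ⟨a, rfl⟩ := Ideal.Quotient.mk_surjective a
        rw [← ha]
        refine Ideal.Quotient.eq_zero_iff_mem.2 ?_
        exact Ideal.mul_mem_right _ _ (X_mem_PF.2 hv)

theorem scm_data {I : Ideal (MvPolynomial (Fin n) K)} (h : IsSeqCM K I) (d : ℕ) :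
    ∃ W : Submodule (MvPolynomial (Fin n) K) (MvPolynomial (Fin n) K ⧸ I),
      (∀ (ρ : Finset (Fin n)) (i : ℕ), i + ρ.card < d →
        LZ (PF K (∅ : Finset (Fin n))) (MvPolynomial (Fin n) K ⧸ PF K ρ) ((MvPolynomial (Fin n) K ⧸ I) ⧸ W) i) ∧
      (∀ F : Finset (Fin n), d ≤ F.card → I ≤ PF K F → ∀ p, Ideal.Quotient.mk I p ∈ W →
        p ∈ PF K F) := by
  classical
  obtain ⟨r, Mf, h0, hl, hle, _, hCM, hdim⟩ := h
  let Pr : ℕ → Prop := fun k => ∀ i : Fin r, k ≤ i.1 →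
    (((d : ℕ) : WithTop ℕ) : WithBot (WithTop ℕ)) ≤
      dimR n K (subQuot (Mf i.castSucc) (Mf i.succ))
  have hPr : ∃ k, Pr k := ⟨r, fun i hi => absurd i.2 (by omega)⟩
  have hjr : Nat.find hPr ≤ r := Nat.find_le (fun i hi => absurd i.2 (by omega))
  have hj := Nat.find_spec hPr
  have hjm : ∀ i : Fin r, i.1 < Nat.find hPr → dimR n K (subQuot (Mf i.castSucc) (Mf i.succ)) <
      (((d : ℕ) : WithTop ℕ) : WithBot (WithTop ℕ)) := by
    intro i hi
    by_contra hc
    push Not at hc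
    refine Nat.find_min hPr hi ?_
    intro i' hi'
    rcases eq_or_lt_of_le hi' with h | h
    · have : i = i' := Fin.ext h
      rw [← this]; exact hc
    · exact hc.trans (hdim i i' h).le
  generalize Nat.find hPr = j at hjr hj hjm
  refine ⟨Mf ⟨j, by omega⟩, ?_, ?_⟩
  · intro ρ i hi
    have : ∀ k (hk : k ≤ r), j ≤ k → LZ (PF K (∅ : Finset (Fin n))) (MvPolynomial (Fin n) K ⧸ PF K ρ)
        ((MvPolynomial (Fin n) K ⧸ I) ⧸ Mf ⟨k, by omega⟩) i := by
      intro k hk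
      induction hk using Nat.decreasingInduction with
      | self =>
        intro _
        apply LZ.of_kill
        refine ⟨1, by simp, fun b => ?_⟩
        have : Mf ⟨r, by omega⟩ = ⊤ := hl
        obtain ⟨b, rfl⟩ := Submodule.mkQ_surjective _ b
        rw [one_smul, Submodule.mkQ_apply, Submodule.Quotient.mk_eq_zero, this]
        trivial
      | of_succ k hk ih =>
        intro hjk
        refine LZ.quot (hle ⟨k, hk⟩) ?_ (ih (by omega))
        exact cm_LZ (hCM ⟨k, hk⟩) (hj ⟨k, hk⟩ hjk) ρ i hi
    exact this j hjr le_rfl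
  · intro F hF hIF
    have : ∀ k (hk : k ≤ j), ∀ p, Ideal.Quotient.mk I p ∈ Mf ⟨k, by omega⟩ → p ∈ PF K F := by
      intro k
      induction k with
      | zero =>
        intro _ p hp
        have h0' : Mf ⟨0, by omega⟩ = ⊥ := h0
        rw [h0', Submodule.mem_bot, Ideal.Quotient.eq_zero_iff_mem] at hp
        exact hIF hp
      | succ k ih =>
        intro hk p hp
        have hkr : k < r := by omega
        have h1 : ¬ (Module.annihilator (MvPolynomial (Fin n) K)
            (subQuot (Mf (⟨k, hkr⟩ : Fin r).castSucc) (Mf (⟨k, hkr⟩ : Fin r).succ)) ≤ PF K F) := by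
          intro hc
          have h2 := dim_ge hc
          have h3 := hjm ⟨k, hkr⟩ (by simp only; omega)
          have h4 := lt_of_le_of_lt h2 h3
          have : F.card < d := by exact_mod_cast h4
          omega
        obtain ⟨a, ha, haF⟩ := Set.not_subset.1 h1
        have ha' := Module.mem_annihilator.1 ha (Submodule.Quotient.mk ⟨_, hp⟩)
        rw [← Submodule.Quotient.mk_smul, Submodule.Quotient.mk_eq_zero] at ha'
        have h5 : a * p ∈ PF K F := ih (by omega) (a * p) ha'
        exact (Ideal.IsPrime.mem_or_mem inferInstance h5).resolve_left haF
    exact this j le_rfl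

end SCM
end SCMB

namespace SCMB

section ThmC

variable {n : ℕ} {K : Type} [Field K]

theorem hom_kill {I : Ideal (MvPolynomial (Fin n) K)}
    {W : Submodule (MvPolynomial (Fin n) K) (MvPolynomial (Fin n) K ⧸ I)}
    (L : Finset (Finset (Fin n)))
    (hL : ∀ F ∈ L, LZ (PF K (∅ : Finset (Fin n))) (MvPolynomial (Fin n) K ⧸ PF K F)
      ((MvPolynomial (Fin n) K ⧸ I) ⧸ W) 0) :
    ∃ s : MvPolynomial (Fin n) K, s - 1 ∈ PF K (∅ : Finset (Fin n)) ∧ ∀ y,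
      (∀ p, (∀ F ∈ L, p ∈ PF K F) → Ideal.Quotient.mk I (p * y) ∈ W) →
      Ideal.Quotient.mk I (s * y) ∈ W := by
  classical
  induction L using Finset.induction_on with
  | empty =>
    refine ⟨1, by simp, fun y hy => hy 1 (by simp)⟩
  | insert F L _ ih =>
    obtain ⟨s, hs, hs'⟩ := ih fun F' hF' => hL F' (Finset.mem_insert_of_mem hF')
    obtain ⟨t, ht, ht'⟩ := (hL F (Finset.mem_insert_self F L)).hom
    refine ⟨t * s, one_add_mul ht hs, fun y hy => ?_⟩
    have h1 : ∀ q ∈ PF K F, Ideal.Quotient.mk I (s * (q * y)) ∈ W := by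
      intro q hq
      apply hs'
      intro p hp
      rw [← mul_assoc]
      apply hy
      intro F' hF'
      rcases Finset.mem_insert.1 hF' with rfl | h
      · exact Ideal.mul_mem_left _ _ hq
      · exact Ideal.mul_mem_right _ _ (hp F' h)
    let f : (MvPolynomial (Fin n) K ⧸ PF K F) →ₗ[MvPolynomial (Fin n) K]
        ((MvPolynomial (Fin n) K ⧸ I) ⧸ W) :=
      Submodule.liftQ (PF K F) (LinearMap.toSpanSingleton (MvPolynomial (Fin n) K) _
        (W.mkQ (Ideal.Quotient.mk I (s * y)))) (by
          intro q hq
          rw [LinearMap.mem_ker, LinearMap.toSpanSingleton_apply, ← map_smul]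
          refine (Submodule.Quotient.mk_eq_zero W).2 ?_
          have := h1 q hq
          rw [mul_left_comm] at this
          exact this)
    have h2 := LinearMap.congr_fun (ht' f) (Submodule.mkQ _ 1)
    have h3 : f (Submodule.mkQ _ 1) = W.mkQ (Ideal.Quotient.mk I (s * y)) := by
      rw [Submodule.mkQ_apply, Submodule.liftQ_apply, LinearMap.toSpanSingleton_apply, one_smul]
    rw [LinearMap.smul_apply, h3, ← map_smul] at h2
    have h4 := (Submodule.Quotient.mk_eq_zero W).1 h2
    rw [mul_assoc]
    exact h4

theorem not_mem_of_one {s : MvPolynomial (Fin n) K} (hs : s - 1 ∈ PF K (∅ : Finset (Fin n)))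
    (F : Finset (Fin n)) : s ∉ PF K F := by
  intro h
  have h1 : s ∈ PF K (∅ : Finset (Fin n)) := PF_anti (Finset.empty_subset F) h
  have : (1 : MvPolynomial (Fin n) K) ∈ PF K (∅ : Finset (Fin n)) := by
    have := Ideal.sub_mem _ h1 hs
    simpa using this
  exact (Ideal.ne_top_iff_one _).1 (Ideal.IsPrime.ne_top inferInstance) this

theorem thmC (G : SimpleGraph (Fin n)) (h : IsSeqCM K (graphIdeal K G)) {F1 ρ : Finset (Fin n)}
    (hF1 : Indep G F1) (hρ : ρ ⊆ F1) (hc : ρ.card + 2 ≤ F1.card)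
    (hex : ∃ F, Indep G F ∧ F ≠ F1 ∧ F1.card ≤ F.card ∧ ρ ⊆ F)
    (hall : ∀ F, Indep G F → F ≠ F1 → F1.card ≤ F.card → ρ ⊆ F → F ∩ F1 = ρ) : False := by
  classical
  set I := graphIdeal K G with hI
  obtain ⟨W, hW1, hW2⟩ := scm_data h F1.card
  obtain ⟨s, hs, hsk⟩ := hom_kill (W := W)
    (Finset.univ.filter fun F => Indep G F ∧ F.card < F1.card) (by
      intro F hF
      simp only [Finset.mem_filter, Finset.mem_univ, true_and] at hF
      exact hW1 F 0 (by omega))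
  -- elements of the big intersection are pushed into `W` by `s`
  have hbig : ∀ y, (∀ F, Indep G F → F1.card ≤ F.card → y ∈ PF K F) →
      Ideal.Quotient.mk I (s * y) ∈ W := by
    intro y hy
    apply hsk
    intro p hp
    have : p * y ∈ I := by
      apply mem_graphIdeal_of
      intro F hF
      by_cases hd : F1.card ≤ F.card
      · exact Ideal.mul_mem_left _ _ (hy F hF hd)
      · exact Ideal.mul_mem_right _ _ (hp F (by simp [hF]; omega))
    rw [Ideal.Quotient.eq_zero_iff_mem.2 this]
    exact W.zero_mem
  have hWP : ∀ F, Indep G F → F1.card ≤ F.card → ∀ p, Ideal.Quotient.mk I p ∈ W → p ∈ PF K F :=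
    fun F hF hd => hW2 F hd (graphIdeal_le G hF)
  set J : Ideal (MvPolynomial (Fin n) K) := ⨅ F : {F : Finset (Fin n) // Indep G F ∧ F ≠ F1 ∧
    F1.card ≤ F.card}, PF K F.1 with hJ
  have memJ : ∀ p, p ∈ J ↔ ∀ F, Indep G F → F ≠ F1 → F1.card ≤ F.card → p ∈ PF K F := by
    intro p
    rw [hJ, Ideal.mem_iInf]
    exact ⟨fun h F h1 h2 h3 => h ⟨F, h1, h2, h3⟩, fun h F => h F.1 F.2.1 F.2.2.1 F.2.2.2⟩
  have hIJ : ∀ y, y ∈ PF K F1 → y ∈ J → Ideal.Quotient.mk I (s * y) ∈ W := by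
    intro y h1 h2
    apply hbig
    intro F hF hd
    by_cases hFF : F = F1
    · rw [hFF]; exact h1
    · exact (memJ y).1 h2 F hF hFF hd
  set m0 : Fin n →₀ ℕ := ∑ v ∈ ρ, Finsupp.single v 1 with hm0
  have hm0s : m0.support = ρ := by
    ext v
    rw [Finsupp.mem_support_iff, hm0, Finsupp.finsetSum_apply, Ne, Finset.sum_eq_zero_iff]
    push Not
    simp [Finsupp.single_apply]
  set u : MvPolynomial (Fin n) K := monomial m0 1 with hu
  have huQ : u ∉ PF K ρ := by
    intro hc
    exact mem_PF.1 hc m0 (by rw [hu, coeff_monomial, if_pos rfl]; exact one_ne_zero) (by rw [hm0s])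
  let jq : MvPolynomial (Fin n) K → MvPolynomial (Fin n) K := fun q => prF K F1 (q * u)
  have hjP : ∀ q, q * u - jq q ∈ PF K F1 := fun q => sub_prF_mem _ _
  have hjJ : ∀ q ∈ PF K ρ, jq q ∈ J := by
    intro q hq
    rw [memJ]
    intro F hF hne hd
    rw [mem_PF]
    intro m hm hmF
    simp only [jq, coeff_prF] at hm
    split_ifs at hm with hmF1
    · rw [hu, coeff_mul_monomial'] at hm
      split_ifs at hm with hle
      · rw [mul_one] at hm
        have hρm : ρ ⊆ m.support := by
          rw [← hm0s]
          exact Finsupp.support_mono hle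
        have h1 := hall F hF hne hd (hρm.trans hmF)
        have h2 : m.support ⊆ ρ := by
          rw [← h1]; exact Finset.subset_inter hmF hmF1
        refine mem_PF.1 hq _ hm ?_
        exact (Finsupp.support_mono tsub_le_self).trans h2
      · exact hm rfl
    · exact hm rfl
  let φ : PF K ρ →ₗ[MvPolynomial (Fin n) K] ((MvPolynomial (Fin n) K ⧸ I) ⧸ W) :=
    { toFun := fun q => W.mkQ (Ideal.Quotient.mk I (s * jq q.1))
      map_add' := by
        intro a b
        have : jq (a + b).1 = jq a.1 + jq b.1 := by
          simp only [jq, Submodule.coe_add, add_mul, map_add]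
        rw [this, mul_add, map_add, map_add]
      map_smul' := by
        intro a q
        rw [RingHom.id_apply, ← map_smul, ← sub_eq_zero, ← map_sub]
        refine (Submodule.Quotient.mk_eq_zero W).2 ?_
        have h1 : s * jq (a • q).1 - a * (s * jq q.1) = s * ((prF K F1 a - a) * jq q.1) := by
          simp only [jq, Submodule.coe_smul, smul_eq_mul, mul_assoc, map_mul]
          ring
        have h2 := hIJ ((prF K F1 a - a) * jq q.1) (Ideal.mul_mem_right _ _ (by
          rw [← neg_mem_iff, neg_sub]; exact sub_prF_mem _ _)) (Ideal.mul_mem_left _ _ (hjJ _ q.2))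
        rw [← h1] at h2
        exact h2 }
  obtain ⟨t, ht, hext⟩ := (hW1 ρ 1 (by omega)).ext
  obtain ⟨c, hc'⟩ := hext φ
  obtain ⟨c, rfl⟩ := Submodule.mkQ_surjective W c
  obtain ⟨c, rfl⟩ := Ideal.Quotient.mk_surjective c
  have key : ∀ q ∈ PF K ρ, Ideal.Quotient.mk I (t * (s * jq q) - q * c) ∈ W := by
    intro q hq
    have h1 := hc' ⟨q, hq⟩
    change t • W.mkQ (Ideal.Quotient.mk I (s * jq q)) = q • W.mkQ (Ideal.Quotient.mk I c) at h1
    rw [← map_smul W.mkQ, ← map_smul W.mkQ, ← sub_eq_zero, ← map_sub] at h1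
    exact (Submodule.Quotient.mk_eq_zero W).1 h1
  have hcJ : c ∈ J := by
    rw [memJ]
    intro F hF hne hd
    obtain ⟨v, hvF, hvρ⟩ : ∃ v ∈ F, v ∉ ρ := by
      by_contra hcon
      push Not at hcon
      have := Finset.card_le_card (s := F) (t := ρ) hcon
      omega
    have hX : (X v : MvPolynomial (Fin n) K) ∈ PF K ρ := X_mem_PF.2 hvρ
    have h1 := hWP F hF hd _ (key _ hX)
    have h2 : t * (s * jq (X v)) ∈ PF K F :=
      Ideal.mul_mem_left _ _ (Ideal.mul_mem_left _ _ ((memJ _).1 (hjJ _ hX) F hF hne hd))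
    have h3 : X v * c ∈ PF K F := by
      have := Ideal.sub_mem _ h2 h1
      rwa [sub_sub_cancel] at this
    exact (Ideal.IsPrime.mem_or_mem inferInstance h3).resolve_left fun h => X_mem_PF.1 h hvF
  have hcP : t * (s * u) - c ∈ PF K F1 := by
    obtain ⟨v, hvF, hvρ⟩ : ∃ v ∈ F1, v ∉ ρ := by
      by_contra hcon
      push Not at hcon
      have := Finset.card_le_card (s := F1) (t := ρ) hcon
      omega
    have hX : (X v : MvPolynomial (Fin n) K) ∈ PF K ρ := X_mem_PF.2 hvρ
    have h1 := hWP F1 hF1 le_rfl _ (key _ hX)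
    have h2 : t * (s * (X v * u - jq (X v))) ∈ PF K F1 :=
      Ideal.mul_mem_left _ _ (Ideal.mul_mem_left _ _ (hjP _))
    have h3 : X v * (t * (s * u) - c) ∈ PF K F1 := by
      have := Ideal.add_mem _ h2 h1
      convert this using 1
      ring
    exact (Ideal.IsPrime.mem_or_mem inferInstance h3).resolve_left fun h => X_mem_PF.1 h hvF
  obtain ⟨F, hF, hne, hd, hρF⟩ := hex
  have hfin : t * (s * u) ∈ PF K ρ := by
    have h1 : c ∈ PF K ρ := PF_anti hρF ((memJ c).1 hcJ F hF hne hd)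
    have h2 := PF_anti hρ hcP
    have := Ideal.add_mem _ h2 h1
    rwa [sub_add_cancel] at this
  rcases Ideal.IsPrime.mem_or_mem inferInstance hfin with h1 | h1
  · exact not_mem_of_one ht _ h1
  rcases Ideal.IsPrime.mem_or_mem inferInstance h1 with h1 | h1
  · exact not_mem_of_one hs _ h1
  · exact huQ h1

end ThmC
end SCMB

namespace SCMB

section LeafSec

variable {n : ℕ} {K : Type} [Field K]

theorem leaf_aux (G : SimpleGraph (Fin n)) (h : IsSeqCM K (graphIdeal K G))
    {S A B : Finset (Fin n)}
    (hSA : Disjoint S A) (hSB : Disjoint S B) (hAB : Disjoint A B)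
    (h1 : Indep G (S ∪ A)) (h2 : Indep G (S ∪ B))
    (hcard : A.card ≤ B.card) (hBne : B.Nonempty)
    (hout : ∀ F, Indep G F → S ⊆ F → F ⊆ S ∪ A ∪ B)
    (hdeg : ∀ b ∈ B, ∃ x ∈ A, ∃ y ∈ A, x ≠ y ∧ G.Adj b x ∧ G.Adj b y) : False := by
  classical
  let T : Finset (Finset (Fin n)) := Finset.univ.filter fun F =>
    Indep G F ∧ F ≠ S ∪ A ∧ (S ∪ A).card ≤ F.card ∧ S ⊆ F
  have hT : ∀ F, F ∈ T ↔ Indep G F ∧ F ≠ S ∪ A ∧ (S ∪ A).card ≤ F.card ∧ S ⊆ F := by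
    intro F; simp [T]
  have hne : T.Nonempty := by
    refine ⟨S ∪ B, (hT _).2 ⟨h2, ?_, ?_, Finset.subset_union_left⟩⟩
    · intro he
      obtain ⟨b, hb⟩ := hBne
      have : b ∈ S ∪ A := he ▸ Finset.mem_union_right _ hb
      rcases Finset.mem_union.1 this with hb' | hb'
      · exact Finset.disjoint_left.1 hSB hb' hb
      · exact Finset.disjoint_left.1 hAB hb' hb
    · rw [Finset.card_union_of_disjoint hSA, Finset.card_union_of_disjoint hSB]
      omega
  obtain ⟨F, hF, hmax⟩ := Finset.exists_max_image T (fun F => (F ∩ (S ∪ A)).card) hne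
  obtain ⟨hFi, hFne, hFc, hSF⟩ := (hT F).1 hF
  obtain ⟨b, hbF, hbn⟩ : ∃ b ∈ F, b ∉ S ∪ A := by
    by_contra hcon
    push Not at hcon
    exact hFne (Finset.eq_of_subset_of_card_le hcon hFc)
  have hbB : b ∈ B := (Finset.mem_union.1 (hout F hFi hSF hbF)).resolve_left hbn
  obtain ⟨x, hx, y, hy, hxy, hbx, hby⟩ := hdeg b hbB
  refine thmC G h (F1 := S ∪ A) (ρ := F ∩ (S ∪ A)) h1 Finset.inter_subset_right ?_
    ⟨F, hFi, hFne, hFc, Finset.inter_subset_left⟩ ?_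
  · have hx' : x ∉ F := fun hc => hFi b hbF x hc hbx
    have hy' : y ∉ F := fun hc => hFi b hbF y hc hby
    have hd : Disjoint (F ∩ (S ∪ A)) {x, y} := by
      rw [Finset.disjoint_left]
      intro z hz hz'
      have hzF := (Finset.mem_inter.1 hz).1
      rcases Finset.mem_insert.1 hz' with rfl | hz'
      · exact hx' hzF
      · rw [Finset.mem_singleton] at hz'
        exact hy' (hz' ▸ hzF)
    have := Finset.card_le_card (s := (F ∩ (S ∪ A)) ∪ {x, y}) (t := S ∪ A) (by
      refine Finset.union_subset Finset.inter_subset_right ?_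
      intro z hz
      rcases Finset.mem_insert.1 hz with rfl | hz'
      · exact Finset.mem_union_right _ hx
      · rw [Finset.mem_singleton] at hz'
        exact Finset.mem_union_right _ (hz' ▸ hy))
    rw [Finset.card_union_of_disjoint hd, Finset.card_pair hxy] at this
    exact this
  · intro F' hF' hne' hc' hρ
    have hS : S ⊆ F' := fun z hz =>
      hρ (Finset.mem_inter.2 ⟨hSF hz, Finset.mem_union_left _ hz⟩)
    have := hmax F' ((hT _).2 ⟨hF', hne', hc', hS⟩)
    exact (Finset.eq_of_subset_of_card_le
      (Finset.subset_inter hρ Finset.inter_subset_right) this).symm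

theorem leafHyp (G : SimpleGraph (Fin n)) (hbip : G.IsBipartiteGraph)
    (h : IsSeqCM K (graphIdeal K G)) : LeafHyp G := by
  classical
  intro σ U hσ hU hedge
  by_contra hcon
  push Not at hcon
  obtain ⟨side, hside⟩ := hbip
  let Z : Finset (Fin n) := Finset.univ.filter fun x => x ∈ U ∧ ∀ y ∈ U, ¬ G.Adj x y
  let A : Finset (Fin n) := Finset.univ.filter fun x => x ∈ U ∧ (∃ y ∈ U, G.Adj x y) ∧ x ∈ side
  let B : Finset (Fin n) := Finset.univ.filter fun x => x ∈ U ∧ (∃ y ∈ U, G.Adj x y) ∧ x ∉ side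
  have mZ : ∀ x, x ∈ Z ↔ x ∈ U ∧ ∀ y ∈ U, ¬ G.Adj x y := by intro x; simp [Z]
  have mA : ∀ x, x ∈ A ↔ x ∈ U ∧ (∃ y ∈ U, G.Adj x y) ∧ x ∈ side := by intro x; simp [A]
  have mB : ∀ x, x ∈ B ↔ x ∈ U ∧ (∃ y ∈ U, G.Adj x y) ∧ x ∉ side := by intro x; simp [B]
  have hsA : ∀ C : Finset (Fin n), (∀ x ∈ C, x ∈ U ∧ ∃ y ∈ U, G.Adj x y) → Disjoint (σ ∪ Z) C := by
    intro C hC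
    rw [Finset.disjoint_left]
    intro x hx hxC
    obtain ⟨hxU, y, hy, hxy⟩ := hC x hxC
    rcases Finset.mem_union.1 hx with hx | hx
    · exact ((hU x).1 hxU).1 hx
    · exact ((mZ x).1 hx).2 y hy hxy
  have hind : ∀ C : Finset (Fin n), (∀ x ∈ C, x ∈ U) → (∀ x ∈ C, ∀ y ∈ C, ¬ G.Adj x y) →
      Indep G ((σ ∪ Z) ∪ C) := by
    intro C hC hCC
    have hUσ : ∀ x ∈ U, ∀ w ∈ σ, ¬ G.Adj w x := fun x hx => ((hU x).1 hx).2
    intro u hu v hv huv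
    simp only [Finset.mem_union] at hu hv
    rcases hu with (hu | hu) | hu <;> rcases hv with (hv | hv) | hv
    · exact hσ u hu v hv huv
    · exact hUσ v ((mZ v).1 hv).1 u hu huv
    · exact hUσ v (hC v hv) u hu huv
    · exact hUσ u ((mZ u).1 hu).1 v hv huv.symm
    · exact ((mZ u).1 hu).2 v ((mZ v).1 hv).1 huv
    · exact ((mZ u).1 hu).2 v (hC v hv) huv
    · exact hUσ u (hC u hu) v hv huv.symm
    · exact ((mZ v).1 hv).2 u (hC u hu) huv.symm
    · exact hCC u hu v hv huv
  have iA := hind A (fun x hx => ((mA x).1 hx).1) (by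
    intro x hx y hy hxy
    exact (hside x y hxy).1 ((mA x).1 hx).2.2 ((mA y).1 hy).2.2)
  have iB := hind B (fun x hx => ((mB x).1 hx).1) (by
    intro x hx y hy hxy
    exact ((mB x).1 hx).2.2 ((hside x y hxy).2 ((mB y).1 hy).2.2))
  have dA := hsA A (fun x hx => ⟨((mA x).1 hx).1, ((mA x).1 hx).2.1⟩)
  have dB := hsA B (fun x hx => ⟨((mB x).1 hx).1, ((mB x).1 hx).2.1⟩)
  have dAB : Disjoint A B := by
    rw [Finset.disjoint_left]
    intro x hx hx'
    exact ((mB x).1 hx').2.2 ((mA x).1 hx).2.2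
  have hout : ∀ F, Indep G F → σ ∪ Z ⊆ F → ∀ x ∈ F, x ∈ σ ∪ Z ∨ x ∈ A ∨ x ∈ B := by
    intro F hF hSF x hx
    by_cases hxs : x ∈ σ
    · exact Or.inl (Finset.mem_union_left _ hxs)
    have hxU : x ∈ U := (hU x).2 ⟨hxs, fun w hw => hF w (hSF (Finset.mem_union_left _ hw)) x hx⟩
    by_cases hxe : ∃ y ∈ U, G.Adj x y
    · by_cases hs : x ∈ side
      · exact Or.inr (Or.inl ((mA x).2 ⟨hxU, hxe, hs⟩))
      · exact Or.inr (Or.inr ((mB x).2 ⟨hxU, hxe, hs⟩))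
    · push Not at hxe
      exact Or.inl (Finset.mem_union_right _ ((mZ x).2 ⟨hxU, hxe⟩))
  have hdeg : ∀ b ∈ U, (∃ y ∈ U, G.Adj b y) →
      ∃ x ∈ U, ∃ y ∈ U, x ≠ y ∧ G.Adj b x ∧ G.Adj b y := by
    rintro b hb ⟨y, hy, hby⟩
    obtain ⟨z, hz, hbz, hzy⟩ := hcon b hb y hy hby
    exact ⟨z, hz, y, hy, hzy, hbz, hby⟩
  have hdB : ∀ b ∈ B, ∃ x ∈ A, ∃ y ∈ A, x ≠ y ∧ G.Adj b x ∧ G.Adj b y := by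
    intro b hb
    obtain ⟨hbU, hbe, hbs⟩ := (mB b).1 hb
    obtain ⟨x, hx, y, hy, hxy, hbx, hby⟩ := hdeg b hbU hbe
    have key : ∀ x ∈ U, G.Adj b x → x ∈ A := fun x hx hbx =>
      (mA x).2 ⟨hx, ⟨b, hbU, hbx.symm⟩, (hside x b hbx.symm).2 hbs⟩
    exact ⟨x, key x hx hbx, y, key y hy hby, hxy, hbx, hby⟩
  have hdA : ∀ b ∈ A, ∃ x ∈ B, ∃ y ∈ B, x ≠ y ∧ G.Adj b x ∧ G.Adj b y := by
    intro b hb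
    obtain ⟨hbU, hbe, hbs⟩ := (mA b).1 hb
    obtain ⟨x, hx, y, hy, hxy, hbx, hby⟩ := hdeg b hbU hbe
    have key : ∀ x ∈ U, G.Adj b x → x ∈ B := fun x hx hbx =>
      (mB x).2 ⟨hx, ⟨b, hbU, hbx.symm⟩, (hside b x hbx).1 hbs⟩
    exact ⟨x, key x hx hbx, y, key y hy hby, hxy, hbx, hby⟩
  have hne : A.Nonempty ∧ B.Nonempty := by
    obtain ⟨u, hu, v, hv, huv⟩ := hedge
    by_cases hs : u ∈ side
    · exact ⟨⟨u, (mA u).2 ⟨hu, ⟨v, hv, huv⟩, hs⟩⟩,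
        ⟨v, (mB v).2 ⟨hv, ⟨u, hu, huv.symm⟩, (hside u v huv).1 hs⟩⟩⟩
    · exact ⟨⟨v, (mA v).2 ⟨hv, ⟨u, hu, huv.symm⟩, (hside v u huv.symm).2 hs⟩⟩,
        ⟨u, (mB u).2 ⟨hu, ⟨v, hv, huv⟩, hs⟩⟩⟩
  rcases le_total A.card B.card with hc | hc
  · refine leaf_aux G h dA dB dAB iA iB hc hne.2 ?_ hdB
    intro F hF hS x hx
    have := hout F hF hS x hx
    rw [Finset.mem_union, Finset.mem_union (s := σ ∪ Z)]
    tauto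
  · refine leaf_aux G h dB dA dAB.symm iB iA hc hne.1 ?_ hdA
    intro F hF hS x hx
    have := hout F hF hS x hx
    rw [Finset.mem_union, Finset.mem_union (s := σ ∪ Z)]
    tauto

theorem im_bdd (G : SimpleGraph (Fin n)) {r : ℕ} (f : Fin r → Fin n × Fin n)
    (hf : G.IsInducedMatching f) : r ≤ n := by
  have hinj : Function.Injective fun i => (f i).1 := by
    intro i j hij
    by_contra hne
    have := hf.2.1 i j hne
    rw [Finset.disjoint_left] at this
    refine this (a := (f i).1) (by simp) ?_
    have h' : (f i).1 = (f j).1 := hij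
    rw [h']; simp
  simpa using Fintype.card_le_of_injective _ hinj

theorem main (G : SimpleGraph (Fin n)) (hbip : G.IsBipartiteGraph)
    (hscm : IsSeqCM K (graphIdeal K G)) : regR (graphIdeal K G) = imG G := by
  have hbdd : BddAbove { r : ℕ | ∃ f : Fin r → Fin n × Fin n, G.IsInducedMatching f } :=
    ⟨n, fun r ⟨f, hf⟩ => im_bdd G f hf⟩
  have hmem : imG G ∈ { r : ℕ | ∃ f : Fin r → Fin n × Fin n, G.IsInducedMatching f } := by
    refine Nat.sSup_mem ⟨0, Fin.elim0, ?_⟩ hbdd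
    exact ⟨fun i => i.elim0, fun i => i.elim0, fun u v _ hu => by simp at hu⟩
  obtain ⟨f, hf⟩ := hmem
  have hup : ∃ F : GFR n K (graphIdeal K G), ∀ i j, F.tw i j ≤ imG G + i := by
    refine graph_upper (leafHyp G hbip hscm) ?_
    intro r g hg _
    exact le_csSup hbdd ⟨g, hg⟩
  apply le_antisymm
  · exact Nat.sInf_le hup
  · refine le_csInf ⟨_, hup⟩ ?_
    rintro c ⟨F, hF⟩
    exact lower G hf F hF

end LeafSec
end SCMB

theorem stmt_9 (K : Type) [Field K] {n : ℕ} (G : SimpleGraph (Fin n))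
    (hbip : G.IsBipartiteGraph) (hscm : IsSeqCM K (graphIdeal K G)) :
    regR (graphIdeal K G) = imG G := by
  exact SCMB.main G hbip hscm
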